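/- Let χ: Z → ℂ be a non-zero linear map. The category B_χ contains a non-zero g(μ,ν)-module if and only if χ(k₀) ≠ 0 and χ(k_j) = 0 for all j = 1, …, N. -/

import Mathlib

namespace ToroidalPaper

noncomputable section

/-- multi-indices r ∈ ℤ^{N+1} -/
abbrev Idx (N : ℕ) := Fin (N + 1) → ℤ

/-- The model for the 1-forms Ω¹_R: the free module on k₀,…,k_N over R,
written in the monomial basis t^r k_p. -/
abbrev OmegaR (N : ℕ) := Idx N →₀ (Fin (N + 1) → ℂ)

/-- The subspace d(R) ⊆ Ω¹_R of exact forms: d(t^r) = Σ_p r_p t^r k_p. -/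
def dR (N : ℕ) : Submodule ℂ (OmegaR N) :=
  Submodule.span ℂ {w : OmegaR N | ∃ r : Idx N, w = Finsupp.single r fun p => (r p : ℂ)}

/-- K = Ω¹_R / d(R) -/
abbrev Kmod (N : ℕ) := OmegaR N ⧸ dR N

variable (N : ℕ) (g : Type) [LieRing g] [LieAlgebra ℂ g]

/-- The underlying vector space of the full toroidal Lie algebra:
(R ⊗ ġ) ⊕ K ⊕ D, where R ⊗ ġ is modeled as `Idx N →₀ g` (coefficient of t^r)
and D as `Idx N →₀ (Fin (N+1) → ℂ)` (coefficients of t^r d_p). -/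
abbrev Carrier := (Idx N →₀ g) × Kmod N × (Idx N →₀ (Fin (N + 1) → ℂ))

/-- A realization of the vector space (R⊗ġ) ⊕ K ⊕ D as a Lie algebra:
a Lie algebra `G` together with a linear identification with the model. -/
structure Tor where
  G : Type
  [instLieRing : LieRing G]
  [instLieAlgebra : LieAlgebra ℂ G]
  e : G ≃ₗ[ℂ] Carrier N g

attribute [instance] Tor.instLieRing Tor.instLieAlgebra

namespace Tor

variable {N g}
variable (T : Tor N g)

/-- the element t^r ⊗ x of R ⊗ ġ -/
def tg (r : Idx N) (x : g) : T.G := T.e.symm (Finsupp.single r x, 0, 0)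

/-- the element t^r k_p of K -/
def k (r : Idx N) (p : Fin (N + 1)) : T.G :=
  T.e.symm (0, Submodule.Quotient.mk (p := dR N) (Finsupp.single r (Pi.single p 1)), 0)

/-- the element t^r d_p of D -/
def d (r : Idx N) (p : Fin (N + 1)) : T.G :=
  T.e.symm (0, 0, Finsupp.single r (Pi.single p 1))

/-- t^m · d(t^r) = Σ_p r_p t^{r+m} k_p -/
def kSum (r m : Idx N) : T.G := ∑ p : Fin (N + 1), (r p : ℂ) • T.k (r + m) p

/-- The bracket relations of the full toroidal Lie algebra g(μ,ν). -/
structure IsToroidal (B : g →ₗ[ℂ] g →ₗ[ℂ] ℂ) (μ ν : ℂ) : Prop where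
  br_gg : ∀ (r m : Idx N) (x y : g),
    ⁅T.tg r x, T.tg m y⁆ = T.tg (r + m) ⁅x, y⁆ + B x y • T.kSum r m
  br_kg : ∀ (r m : Idx N) (p : Fin (N + 1)) (x : g), ⁅T.k r p, T.tg m x⁆ = 0
  br_kk : ∀ (r m : Idx N) (p q : Fin (N + 1)), ⁅T.k r p, T.k m q⁆ = 0
  br_dg : ∀ (r m : Idx N) (a : Fin (N + 1)) (x : g),
    ⁅T.d r a, T.tg m x⁆ = (m a : ℂ) • T.tg (r + m) x
  br_dk : ∀ (r m : Idx N) (a b : Fin (N + 1)),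
    ⁅T.d r a, T.k m b⁆ = (m a : ℂ) • T.k (r + m) b
      + (if a = b then (1 : ℂ) else 0) • T.kSum r m
  br_dd : ∀ (r m : Idx N) (a b : Fin (N + 1)),
    ⁅T.d r a, T.d m b⁆ = (m a : ℂ) • T.d (r + m) b - (r b : ℂ) • T.d (r + m) a
      + (μ * (m a : ℂ) * (r b : ℂ) + ν * (r a : ℂ) * (m b : ℂ)) •
          (∑ p : Fin (N + 1), (m p : ℂ) • T.k (r + m) p)

end Tor

end

end ToroidalPaper

namespace ToroidalPaper

noncomputable section

namespace Tor

variable {N : ℕ} {g : Type} [LieRing g] [LieAlgebra ℂ g] (T : Tor N g)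

/-- The set of homogeneous generators t^r⊗x, t^r k_p, t^r d_p of g(μ,ν) whose
t₀-degree r₀ satisfies the predicate `P`. -/
def genSet (P : ℤ → Prop) : Set T.G :=
  {z | ∃ r : Idx N, P (r 0) ∧
    ((∃ x : g, z = T.tg r x) ∨ (∃ p, z = T.k r p) ∨ (∃ p, z = T.d r p))}

/-- The homogeneous component g_n of the ℤ-grading of g(μ,ν) by t₀-degree. -/
def gdeg (n : ℤ) : Submodule ℂ T.G := Submodule.span ℂ (T.genSet (· = n))

/-- The subalgebra g₊ = ⊕_{n ≥ 1} g_n (as a subspace). -/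
def gpos : Submodule ℂ T.G := Submodule.span ℂ (T.genSet (1 ≤ ·))

variable (Bm : Type) [AddCommGroup Bm] [Module ℂ Bm] [LieRingModule T.G Bm]
  [LieModule ℂ T.G Bm]

/-- The weight space B_m = {v ∈ B | d_j v = m_j v, j = 0,…,N}. -/
def wt (m : Fin (N + 1) → ℂ) : Submodule ℂ Bm :=
  ⨅ j : Fin (N + 1),
    Module.End.eigenspace (LieModule.toEnd ℂ T.G Bm (T.d 0 j)) (m j)

/-- The axioms (B1)-(B4) of the category B_χ, where the central character χ is
recorded through its values χ j = χ(k_j). -/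
structure InCat (χ : Fin (N + 1) → ℂ) : Prop where
  b1_indep : iSupIndep (fun m : Fin (N + 1) → ℂ => T.wt Bm m)
  b1_spans : (⨆ m : Fin (N + 1) → ℂ, T.wt Bm m) = ⊤
  b2 : ∀ m : Fin (N + 1) → ℂ, FiniteDimensional ℂ (T.wt Bm m)
  b3 : ∀ (j : Fin (N + 1)) (v : Bm), ⁅T.k 0 j, v⁆ = χ j • v
  b4 : ∃ M : ℝ, ∀ m : Fin (N + 1) → ℂ, T.wt Bm m ≠ ⊥ → (m 0).re ≤ M

end Tor

/-- A bundled object of the category B_χ. -/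
structure CatObj {N : ℕ} {g : Type} [LieRing g] [LieAlgebra ℂ g] (T : Tor N g)
    (χ : Fin (N + 1) → ℂ) where
  carrier : Type
  [instAdd : AddCommGroup carrier]
  [instMod : Module ℂ carrier]
  [instLieMod : LieRingModule T.G carrier]
  [instLieMod' : LieModule ℂ T.G carrier]
  incat : T.InCat carrier χ

attribute [instance] CatObj.instAdd CatObj.instMod CatObj.instLieMod CatObj.instLieMod'

/-- Irreducibility of an object of B_χ as a g(μ,ν)-module. -/
def CatObj.IsIrreducible {N : ℕ} {g : Type} [LieRing g] [LieAlgebra ℂ g] {T : Tor N g}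
    {χ : Fin (N + 1) → ℂ} (L : CatObj T χ) : Prop :=
  Nontrivial L.carrier ∧ ∀ S : LieSubmodule ℂ T.G L.carrier, S = ⊥ ∨ S = ⊤

end

end ToroidalPaper

namespace ToroidalPaper

/-!
For `j ≠ 0` and `r = p e₀ + n e_j` the elements `t^r d₀` and `t^{-r} k₀` form a Heisenberg pair:
their bracket is `n k_j`.  Suppose that `χ j ≠ 0` and let `l` be a weight above which, in the
direction of `d₀`, there are no weights.  For `r = n e_j` the pair shows that `l + n e_j` or
`l - n e_j` is a weight, for every `n ≠ 0`.  Picking weight vectors `v_n`, the pairs with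
`r = e₀ + n e_j` show that the vectors `t^{-r} k₀ v_n` are linearly independent; as they all lie in
the weight space of `l - e₀`, this is a contradiction.

Conversely, if `χ j = 0` for `j ≠ 0`, the subalgebra of `t₀`-degree at most zero acts on the Laurent
polynomials in `t₁, …, t_N`: for `r 0 = 0`, `t^r k₀` acts by `χ 0` times multiplication by `t^r` and
`t^r d_j` by the corresponding derivation, while everything else acts by zero.  The linear maps from
the enveloping algebra of the positive part to this top carry an action of the whole algebra, and
the top generates a submodule that is spanned by words in elements of negative degree.  Its weight
spaces are finite-dimensional although there are infinitely many words of a given weight: with the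
types of the letters fixed, the matrix coefficients of a word are polynomials in the exponents of
its letters, of a degree that is bounded in terms of the weight.
-/

noncomputable section

attribute [local instance] LieRing.ofAssociativeRing

/-! ### Coinduced modules -/

section Coinduction

open UniversalEnvelopingAlgebra TensorProduct

variable (R L V : Type*) [CommRing R] [LieRing L] [LieAlgebra R L] [AddCommGroup V] [Module R V]

theorem adjoin_range_ι :
    Algebra.adjoin R (Set.range (ι R : L → UniversalEnvelopingAlgebra R L)) = ⊤ := by
  have range_eq : Set.range (ι R : L → UniversalEnvelopingAlgebra R L) =
      mkAlgHom R L '' Set.range (TensorAlgebra.ι R) := by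
    ext; simp
  rw [range_eq, ← AlgHom.map_adjoin, TensorAlgebra.adjoin_range_ι, Algebra.map_top,
    AlgHom.range_eq_top]
  exact RingCon.mkₐ_surjective _

/-- The augmentation (counit) of the enveloping algebra, which defines the vacuum vectors of
coinduced modules. -/
def augmentation : UniversalEnvelopingAlgebra R L →ₐ[R] R := UniversalEnvelopingAlgebra.lift R 0

variable {R L} in
theorem augmentation_mul_ι (u : UniversalEnvelopingAlgebra R L) (y : L) :
    augmentation R L (u * ι R y) = 0 := by
  rw [map_mul, augmentation, lift_ι_apply, LieHom.zero_apply, mul_zero]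

/-- The cofree `L`-module on `V`, i.e. `V` coinduced from the zero subalgebra: linear maps on the
enveloping algebra, with `L` acting by right multiplication on the argument. A type synonym, since
Mathlib lets `L` act on linear maps in a different way. -/
def CofreeLieModule := UniversalEnvelopingAlgebra R L →ₗ[R] V

namespace CofreeLieModule

instance : AddCommGroup (CofreeLieModule R L V) :=
  inferInstanceAs (AddCommGroup (UniversalEnvelopingAlgebra R L →ₗ[R] V))

instance : Module R (CofreeLieModule R L V) :=
  inferInstanceAs (Module R (UniversalEnvelopingAlgebra R L →ₗ[R] V))

instance : FunLike (CofreeLieModule R L V) (UniversalEnvelopingAlgebra R L) V :=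
  inferInstanceAs (FunLike (UniversalEnvelopingAlgebra R L →ₗ[R] V) _ _)

instance : LinearMapClass (CofreeLieModule R L V) R (UniversalEnvelopingAlgebra R L) V :=
  inferInstanceAs (LinearMapClass (UniversalEnvelopingAlgebra R L →ₗ[R] V) R _ _)

variable {R L V}

@[ext]
theorem ext {φ ψ : CofreeLieModule R L V} (h : ∀ u, φ u = ψ u) : φ = ψ := DFunLike.ext φ ψ h

@[simp]
theorem add_apply (φ ψ : CofreeLieModule R L V) (u : UniversalEnvelopingAlgebra R L) :
    (φ + ψ) u = φ u + ψ u := rfl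

@[simp]
theorem sub_apply (φ ψ : CofreeLieModule R L V) (u : UniversalEnvelopingAlgebra R L) :
    (φ - ψ) u = φ u - ψ u := rfl

@[simp]
theorem smul_apply (t : R) (φ : CofreeLieModule R L V) (u : UniversalEnvelopingAlgebra R L) :
    (t • φ) u = t • φ u := rfl

instance : LieRingModule L (CofreeLieModule R L V) where
  bracket y φ := (LinearMap.comp φ (LinearMap.mulRight R (ι R y)) :
    UniversalEnvelopingAlgebra R L →ₗ[R] V)
  add_lie x y φ := ext fun u => by
    change φ _ = φ _ + φ _
    simp only [LinearMap.mulRight_apply, map_add, mul_add]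
  lie_add x φ ψ := rfl
  leibniz_lie x y φ := ext fun u => by
    change φ _ = φ _ + φ _
    simp [LieHom.map_lie, LieRing.of_associative_ring_bracket, mul_sub, mul_assoc]

@[simp]
theorem lie_apply (y : L) (φ : CofreeLieModule R L V) (u : UniversalEnvelopingAlgebra R L) :
    ⁅y, φ⁆ u = φ (u * ι R y) := rfl

instance : LieModule R L (CofreeLieModule R L V) where
  smul_lie t x φ := by ext u; simp
  lie_smul t x φ := rfl

theorem eq_zero_of_apply_one_eq_zero {κ : Type*} (φ : κ → CofreeLieModule R L V)
    (hlie : ∀ i (y : L), ⁅y, φ i⁆ ∈ Submodule.span R (Set.range φ)) (hone : ∀ i, φ i 1 = 0)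
    (i : κ) : φ i = 0 := by
  set S := Submodule.span R (Set.range φ)
  have lie_mem : ∀ y : L, ∀ ψ ∈ S, ⁅y, ψ⁆ ∈ S := fun y ψ hψ =>
    Submodule.span_le (p := S.comap (LieModule.toEnd R L _ y)).2
      (Set.range_subset_iff.2 fun i => hlie i y) hψ
  have one_apply : ∀ ψ ∈ S, ψ 1 = 0 := fun ψ hψ => by
    induction hψ using Submodule.span_induction with
    | mem ψ hψ => obtain ⟨i, rfl⟩ := hψ; exact hone i
    | zero => rfl
    | add ψ ψ' _ _ h h' => rw [add_apply, h, h', add_zero]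
    | smul t ψ _ h => rw [smul_apply, h, smul_zero]
  have mul_apply (u : UniversalEnvelopingAlgebra R L) :
      ∀ w, (∀ ψ ∈ S, ψ w = 0) → ∀ ψ ∈ S, ψ (w * u) = 0 := by
    induction (adjoin_range_ι R L ▸ Algebra.mem_top : u ∈ Algebra.adjoin R (Set.range (ι R)))
      using Algebra.adjoin_induction with
    | mem u hu =>
      obtain ⟨y, rfl⟩ := hu
      exact fun w hw ψ hψ => hw ⁅y, ψ⁆ (lie_mem y ψ hψ)
    | algebraMap t =>
      intro w hw ψ hψ
      rw [← Algebra.commutes, ← Algebra.smul_def, map_smul, hw ψ hψ, smul_zero]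
    | add u u' _ _ h h' =>
      intro w hw ψ hψ
      rw [mul_add, map_add, h w hw ψ hψ, h' w hw ψ hψ, add_zero]
    | mul u u' _ _ h h' =>
      intro w hw ψ hψ
      rw [← mul_assoc, h' _ (h w hw) ψ hψ]
  exact ext fun u => one_mul u ▸ mul_apply u 1 one_apply (φ i) (Submodule.subset_span ⟨i, rfl⟩)

section Lift

variable {M : Type*} [AddCommGroup M] [Module R M] [LieRingModule L M] [LieModule R L M]

/-- The universal property of the cofree module (Frobenius reciprocity): a linear map `M → V`
is the value at `1` of a unique morphism of Lie modules. -/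
def lift (f : M →ₗ[R] V) : M →ₗ⁅R, L⁆ CofreeLieModule R L V where
  toFun m := f ∘ₗ (UniversalEnvelopingAlgebra.lift R (LieModule.toEnd R L M)).toLinearMap.flip m
  map_add' m m' := by simp only [map_add, LinearMap.comp_add]; rfl
  map_smul' t m := by simp only [map_smul, LinearMap.comp_smul]; rfl
  map_lie' {y m} := ext fun u => by
    change f _ = f _
    simp

@[simp]
theorem lift_apply_one (f : M →ₗ[R] V) (m : M) : lift (L := L) f m 1 = f m := by
  change f _ = _
  simp

end Lift

end CofreeLieModule

/-- The data from which a representation on `V` of a subalgebra `𝔟` of `G` is coinduced to `G`,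
given a second subalgebra `𝔞` with `G = 𝔟 ⊕ 𝔞`. The subalgebra `𝔟` is encoded as the kernel of the
projection `proj` to `𝔞`, and its representation is extended by zero on `𝔞` to the linear map `rep`
on `G`. -/
structure CoinductionDatum (R G V : Type*) [CommRing R] [LieRing G] [LieAlgebra R G]
    [AddCommGroup V] [Module R V] where
  compl : LieSubalgebra R G
  proj : G →ₗ[R] compl
  rep : G →ₗ[R] Module.End R V
  proj_coe : ∀ y : compl, proj y = y
  rep_coe : ∀ y : compl, rep y = 0
  proj_lie : ∀ x y : G, proj x = 0 → proj y = 0 → proj ⁅x, y⁆ = 0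
  rep_lie : ∀ x y : G, proj x = 0 → proj y = 0 → rep ⁅x, y⁆ = ⁅rep x, rep y⁆

namespace CoinductionDatum

variable {R G V : Type*} [CommRing R] [LieRing G] [LieAlgebra R G] [AddCommGroup V] [Module R V]
  (c : CoinductionDatum R G V)

/-- The space of the representation of `G` coinduced from `c`: restricted to the complement of the
inducing subalgebra it is cofree. -/
def Coind := CofreeLieModule R c.compl V

instance : AddCommGroup c.Coind := inferInstanceAs (AddCommGroup (CofreeLieModule R c.compl V))

instance : Module R c.Coind := inferInstanceAs (Module R (CofreeLieModule R c.compl V))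

/-- Evaluation at the unit of the enveloping algebra. -/
def eval : c.Coind →ₗ[R] V where
  toFun φ := (show CofreeLieModule R c.compl V from φ) 1
  map_add' _ _ := rfl
  map_smul' _ _ := rfl

/-- The action of `G` on the cofree module followed by evaluation at `1`: the component of `g` in
the inducing subalgebra acts on the value through `rep`, the other one moves the argument. -/
def actionAtOne : G →ₗ[R] CofreeLieModule R c.compl V →ₗ[R] V :=
  LinearMap.mk₂ R (fun g φ => c.rep g (φ 1) + φ (ι R (c.proj g)))
    (fun g h φ => by simp only [map_add, LinearMap.add_apply]; abel)
    (fun t g φ => by simp only [map_smul, LinearMap.smul_apply, smul_add])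
    (fun g φ ψ => by simp only [CofreeLieModule.add_apply, map_add]; abel)
    (fun t g φ => by simp only [CofreeLieModule.smul_apply, map_smul, smul_add])

/-- The coinduced action, determined by `actionAtOne` through Frobenius reciprocity for the
complement. -/
def action : G ⊗[R] CofreeLieModule R c.compl V →ₗ⁅R, c.compl⁆ CofreeLieModule R c.compl V :=
  CofreeLieModule.lift (TensorProduct.lift c.actionAtOne)

theorem action_apply_one (g : G) (φ : CofreeLieModule R c.compl V) :
    c.action (g ⊗ₜ φ) 1 = c.rep g (φ 1) + φ (ι R (c.proj g)) := by
  simp [action, actionAtOne]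

theorem lie_action (y : c.compl) (g : G) (φ : CofreeLieModule R c.compl V) :
    ⁅y, c.action (g ⊗ₜ φ)⁆ = c.action (⁅(y : G), g⁆ ⊗ₜ φ) + c.action (g ⊗ₜ ⁅y, φ⁆) := by
  rw [← LieModuleHom.map_lie, TensorProduct.LieModule.lie_tmul_right, map_add]; rfl

theorem action_apply_ι (g : G) (φ : CofreeLieModule R c.compl V) (y : c.compl) :
    c.action (g ⊗ₜ φ) (ι R y) = c.rep ⁅(y : G), g⁆ (φ 1) + φ (ι R (c.proj ⁅(y : G), g⁆)) +
      (c.rep g (φ (ι R y)) + φ (ι R (c.proj g) * ι R y)) := by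
  have lie_apply_one := congrArg (· 1) (c.lie_action y g φ)
  simpa [action_apply_one] using lie_apply_one

theorem action_coe (y : c.compl) (φ : CofreeLieModule R c.compl V) :
    c.action ((y : G) ⊗ₜ φ) = ⁅y, φ⁆ := by
  let defect (p : c.compl × CofreeLieModule R c.compl V) : CofreeLieModule R c.compl V :=
    c.action ((p.1 : G) ⊗ₜ p.2) - ⁅p.1, p.2⁆
  refine sub_eq_zero.1 (CofreeLieModule.eq_zero_of_apply_one_eq_zero defect ?_ ?_ (y, φ))
  · rintro ⟨y, φ⟩ z
    have lie_defect : ⁅z, defect (y, φ)⁆ = defect (⁅z, y⁆, φ) + defect (y, ⁅z, φ⁆) := by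
      simp only [defect, lie_sub, c.lie_action, leibniz_lie z y φ, LieSubalgebra.coe_bracket]
      abel
    rw [lie_defect]
    exact add_mem (Submodule.subset_span ⟨_, rfl⟩) (Submodule.subset_span ⟨_, rfl⟩)
  · rintro ⟨y, φ⟩
    simp [defect, action_apply_one, c.rep_coe, c.proj_coe]

theorem lie_eq_add_of_proj (g h : G) :
    ⁅g, h⁆ = ⁅g - c.proj g, h - c.proj h⁆ + (⁅(c.proj g : G), h⁆ - ⁅(c.proj h : G), g⁆
      + (⁅c.proj h, c.proj g⁆ : c.compl)) := by
  simp only [sub_lie, lie_sub, LieSubalgebra.coe_bracket]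
  rw [← lie_skew g (c.proj h : G), ← lie_skew (c.proj h : G) (c.proj g : G)]
  abel

theorem proj_sub_proj (g : G) : c.proj (g - c.proj g) = 0 := by
  rw [map_sub, c.proj_coe, sub_self]

theorem rep_lie_eq (g h : G) :
    c.rep ⁅g, h⁆ = ⁅c.rep g, c.rep h⁆ + c.rep ⁅(c.proj g : G), h⁆ - c.rep ⁅(c.proj h : G), g⁆ := by
  rw [c.lie_eq_add_of_proj, map_add, c.rep_lie _ _ (c.proj_sub_proj g) (c.proj_sub_proj h)]
  simp only [map_add, map_sub, c.rep_coe, sub_zero, add_zero, add_sub_assoc]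

theorem proj_lie_eq (g h : G) :
    c.proj ⁅g, h⁆ =
      c.proj ⁅(c.proj g : G), h⁆ - c.proj ⁅(c.proj h : G), g⁆ + ⁅c.proj h, c.proj g⁆ := by
  rw [c.lie_eq_add_of_proj, map_add, c.proj_lie _ _ (c.proj_sub_proj g) (c.proj_sub_proj h)]
  simp only [map_add, map_sub, c.proj_coe, zero_add]

theorem action_lie (g h : G) (φ : CofreeLieModule R c.compl V) :
    c.action (⁅g, h⁆ ⊗ₜ φ) =
      c.action (g ⊗ₜ c.action (h ⊗ₜ φ)) - c.action (h ⊗ₜ c.action (g ⊗ₜ φ)) := by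
  let defect (p : G × G × CofreeLieModule R c.compl V) : CofreeLieModule R c.compl V :=
    c.action (⁅p.1, p.2.1⁆ ⊗ₜ p.2.2) -
      (c.action (p.1 ⊗ₜ c.action (p.2.1 ⊗ₜ p.2.2)) - c.action (p.2.1 ⊗ₜ c.action (p.1 ⊗ₜ p.2.2)))
  refine sub_eq_zero.1 (CofreeLieModule.eq_zero_of_apply_one_eq_zero defect ?_ ?_ (g, h, φ))
  · rintro ⟨g, h, φ⟩ y
    have lie_defect : ⁅y, defect (g, h, φ)⁆ =
        defect (⁅(y : G), g⁆, h, φ) + defect (g, ⁅(y : G), h⁆, φ) + defect (g, h, ⁅y, φ⁆) := by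
      simp only [defect, lie_sub, c.lie_action, leibniz_lie (y : G) g h, TensorProduct.tmul_add,
        TensorProduct.add_tmul, map_add]
      abel
    rw [lie_defect]
    exact add_mem (add_mem (Submodule.subset_span ⟨_, rfl⟩) (Submodule.subset_span ⟨_, rfl⟩))
      (Submodule.subset_span ⟨_, rfl⟩)
  · rintro ⟨g, h, φ⟩
    simp only [defect, CofreeLieModule.sub_apply, action_apply_one, action_apply_ι]
    rw [c.rep_lie_eq g h, c.proj_lie_eq g h]
    simp only [LieHom.map_lie, map_add, map_sub, LieRing.of_associative_ring_bracket,
      LinearMap.add_apply, LinearMap.sub_apply, Module.End.mul_apply]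
    abel

/-- The coinduced representation on the underlying cofree module. -/
def actionHom : G →ₗ⁅R⁆ Module.End R (CofreeLieModule R c.compl V) where
  __ := TensorProduct.curry c.action.toLinearMap
  map_lie' {g h} := LinearMap.ext fun φ => c.action_lie g h φ

instance : LieRingModule G c.Coind :=
  LieRingModule.compLieHom (CofreeLieModule R c.compl V) c.actionHom

instance : LieModule R G c.Coind :=
  LieModule.compLieHom (CofreeLieModule R c.compl V) c.actionHom

variable {c}

theorem eval_lie (g : G) (φ : c.Coind) :
    c.eval ⁅g, φ⁆ = c.rep g (c.eval φ) + c.eval ⁅(c.proj g : G), φ⁆ := by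
  have action_eq (φ : CofreeLieModule R c.compl V) :
      c.action (g ⊗ₜ φ) 1 = c.rep g (φ 1) + c.action ((c.proj g : G) ⊗ₜ φ) 1 := by
    rw [action_coe, CofreeLieModule.lie_apply, one_mul, action_apply_one]
  exact action_eq φ

theorem eq_zero_of_eval_eq_zero {κ : Type*} (φ : κ → c.Coind)
    (hlie : ∀ i, ∀ y ∈ c.compl, ⁅y, φ i⁆ ∈ Submodule.span R (Set.range φ))
    (heval : ∀ i, c.eval (φ i) = 0) (i : κ) : φ i = 0 :=
  CofreeLieModule.eq_zero_of_apply_one_eq_zero (L := c.compl) φ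
    (fun i y => c.action_coe y (φ i) ▸ hlie i y y.2) heval i

theorem ext_eval {φ ψ : c.Coind} (heval : c.eval φ = c.eval ψ)
    (hlie : ∀ y ∈ c.compl, ⁅y, φ⁆ = ⁅y, ψ⁆) : φ = ψ := by
  refine sub_eq_zero.1 (eq_zero_of_eval_eq_zero (fun _ : Unit => φ - ψ) (fun _ y hy => ?_)
    (fun _ => by rw [map_sub, heval, sub_self]) ())
  rw [lie_sub, hlie y hy, sub_self]
  exact zero_mem _

/-- For a central `z` the operator `rep z` intertwines, so it acts on the values of `φ`. -/
theorem lie_eq_smul_of_central {z : G} (hz : ∀ g : G, ⁅g, z⁆ = 0) (hproj : c.proj z = 0) {t : R}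
    (hrep : c.rep z = t • 1) (φ : c.Coind) : ⁅z, φ⁆ = t • φ := by
  refine sub_eq_zero.1 (eq_zero_of_eval_eq_zero (fun φ : c.Coind => ⁅z, φ⁆ - t • φ)
    (fun φ y _ => Submodule.subset_span ⟨⁅y, φ⁆, ?_⟩) (fun φ => ?_) φ)
  · simp only [lie_sub, lie_smul, leibniz_lie y z φ, hz, zero_lie, zero_add]
  · simp [eval_lie z φ, hproj, hrep]

variable (c) in
/-- The coinduced vector with value `v` at the unit that vanishes on the augmentation ideal of the
enveloping algebra of the complement. -/
def vac : V →ₗ[R] c.Coind where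
  toFun v := (augmentation R c.compl).toLinearMap.smulRight v
  map_add' v w := CofreeLieModule.ext fun _ => smul_add _ v w
  map_smul' t v := CofreeLieModule.ext fun _ => smul_comm _ t v

theorem eval_vac (v : V) : c.eval (c.vac v) = v :=
  (congrArg (· • v) (map_one (augmentation R c.compl))).trans (one_smul R v)

theorem lie_vac_of_mem {y : G} (hy : y ∈ c.compl) (v : V) : ⁅y, c.vac v⁆ = 0 :=
  (c.action_coe ⟨y, hy⟩ (c.vac v)).trans <| CofreeLieModule.ext fun u =>
    (congrArg (· • v) (augmentation_mul_ι u ⟨y, hy⟩)).trans (zero_smul R v)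

theorem lie_vac {x : G} (hproj : c.proj x = 0) (hx : ∀ y ∈ c.compl, ⁅y, x⁆ ∈ c.compl) (v : V) :
    ⁅x, c.vac v⁆ = c.vac (c.rep x v) := by
  refine ext_eval ?_ fun y hy => ?_
  · simp [eval_lie x, hproj, eval_vac]
  · rw [leibniz_lie, lie_vac_of_mem (hx y hy), lie_vac_of_mem hy, lie_vac_of_mem hy, lie_zero,
      add_zero]

end CoinductionDatum

end Coinduction

/-! ### Monomials of the toroidal algebra -/

/-- The coefficient space of a monomial `t^r`: a triple `(x, κ, δ)` stands for
`t^r ⊗ x + ∑ κ_p t^r k_p + ∑ δ_p t^r d_p`. -/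
abbrev Coeff (N : ℕ) (g : Type) := g × (Fin (N + 1) → ℂ) × (Fin (N + 1) → ℂ)

/-- A multi-index regarded as a complex vector, so that it can serve as a coefficient and as a
shift of weights. -/
def expVec {N : ℕ} : Idx N →+ (Fin (N + 1) → ℂ) := (Int.castAddHom ℂ).compLeft _

section ExpVec

variable {N : ℕ}

@[simp]
theorem expVec_apply (r : Idx N) (p : Fin (N + 1)) : expVec r p = r p := rfl

theorem expVec_injective : Function.Injective (expVec (N := N)) := fun _ _ h =>
  funext fun p => Int.cast_injective (congrFun h p)

theorem expVec_single (j : Fin (N + 1)) (n : ℤ) :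
    expVec (Pi.single j n) = Pi.single j (n : ℂ) := by
  ext p
  simp only [expVec_apply, Pi.single_apply, apply_ite (Int.cast : ℤ → ℂ), Int.cast_zero]

end ExpVec

theorem map_eq_sum_smul_single {ι R M : Type*} [Fintype ι] [DecidableEq ι] [Semiring R]
    [AddCommMonoid M] [Module R M] (f : (ι → R) →ₗ[R] M) (κ : ι → R) :
    f κ = ∑ p, κ p • f (Pi.single p 1) := by
  conv_lhs => rw [pi_eq_sum_univ' κ, map_sum]
  simp only [map_smul]

namespace Tor

variable {N : ℕ} {g : Type} [LieRing g] [LieAlgebra ℂ g] (T : Tor N g)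

/-- The element of the toroidal algebra with a given coefficient at a single monomial `t^r`. -/
def monomial (r : Idx N) : Coeff N g →ₗ[ℂ] T.G :=
  T.e.symm.toLinearMap ∘ₗ LinearMap.prodMap (Finsupp.lsingle r)
    (LinearMap.prodMap ((dR N).mkQ ∘ₗ Finsupp.lsingle r) (Finsupp.lsingle r))

theorem monomial_apply (r : Idx N) (w : Coeff N g) : T.monomial r w =
    T.e.symm (Finsupp.single r w.1, (dR N).mkQ (Finsupp.single r w.2.1),
      Finsupp.single r w.2.2) := rfl

theorem tg_eq (r : Idx N) (x : g) : T.tg r x = T.monomial r (x, 0, 0) := by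
  simp [monomial_apply, tg]

theorem k_eq (r : Idx N) (p : Fin (N + 1)) : T.k r p = T.monomial r (0, Pi.single p 1, 0) := by
  simp [monomial_apply, k]

theorem d_eq (r : Idx N) (p : Fin (N + 1)) : T.d r p = T.monomial r (0, 0, Pi.single p 1) := by
  simp [monomial_apply, d]

theorem monomial_k (r : Idx N) (κ : Fin (N + 1) → ℂ) :
    T.monomial r (0, κ, 0) = ∑ p, κ p • T.k r p := by
  simpa [k_eq] using map_eq_sum_smul_single
    (T.monomial r ∘ₗ LinearMap.inr ℂ _ _ ∘ₗ LinearMap.inl ℂ _ _) κ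

theorem monomial_d (r : Idx N) (δ : Fin (N + 1) → ℂ) :
    T.monomial r (0, 0, δ) = ∑ p, δ p • T.d r p := by
  simpa [d_eq] using map_eq_sum_smul_single
    (T.monomial r ∘ₗ LinearMap.inr ℂ _ _ ∘ₗ LinearMap.inr ℂ _ _) δ

theorem monomial_expVec (r : Idx N) : T.monomial r (0, expVec r, 0) = 0 := by
  have exact_form : (dR N).mkQ (Finsupp.single r (expVec r)) = 0 :=
    (Submodule.Quotient.mk_eq_zero _).2 (Submodule.subset_span ⟨r, rfl⟩)
  simp [monomial_apply, exact_form]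

theorem kSum_eq (r m : Idx N) : T.kSum r m = T.monomial (r + m) (0, expVec r, 0) := by
  rw [monomial_k]; rfl

theorem monomial_eq_add (r : Idx N) (x : g) (κ δ : Fin (N + 1) → ℂ) :
    T.monomial r (x, κ, δ) =
      T.monomial r (x, 0, 0) + T.monomial r (0, κ, 0) + T.monomial r (0, 0, δ) := by
  simp [← map_add]

section HomExt

variable {X : Type*} [AddCommGroup X] [Module ℂ X]

variable {T} in
theorem hom_ext {φ ψ : T.G →ₗ[ℂ] X} (h : ∀ r w, φ (T.monomial r w) = ψ (T.monomial r w)) :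
    φ = ψ := by
  suffices φ ∘ₗ T.e.symm.toLinearMap = ψ ∘ₗ T.e.symm.toLinearMap from
    LinearMap.ext fun z => by simpa using LinearMap.congr_fun this (T.e z)
  refine LinearMap.prod_ext (Finsupp.lhom_ext fun r x => ?_) (LinearMap.prod_ext
    (Submodule.linearMap_qext _ (Finsupp.lhom_ext fun r κ => ?_)) (Finsupp.lhom_ext fun r δ => ?_))
  · simpa [monomial_apply, Prod.zero_eq_mk] using h r (x, 0, 0)
  · simpa [monomial_apply] using h r (0, κ, 0)
  · simpa [monomial_apply] using h r (0, 0, δ)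

theorem span_monomial : Submodule.span ℂ {z | ∃ r w, z = T.monomial r w} = ⊤ := by
  rw [← Submodule.ker_mkQ (Submodule.span _ _), LinearMap.ker_eq_top]
  exact hom_ext fun r w => (Submodule.Quotient.mk_eq_zero _).2 (Submodule.subset_span ⟨r, w, rfl⟩)

variable (f : Idx N → Coeff N g →ₗ[ℂ] X) (hf : ∀ r, f r (0, expVec r, 0) = 0)

include hf in
theorem dR_le_ker : dR N ≤ (Finsupp.lsum ℂ fun r =>
    f r ∘ₗ LinearMap.inr ℂ _ _ ∘ₗ LinearMap.inl ℂ _ _).ker := by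
  refine Submodule.span_le.2 ?_
  rintro _ ⟨r, rfl⟩
  rw [SetLike.mem_coe, LinearMap.mem_ker, Finsupp.lsum_single]
  exact hf r

/-- The linear map out of the toroidal algebra with prescribed values on the monomials; the
condition `hf` accounts for the quotient by the exact forms. -/
def lift : T.G →ₗ[ℂ] X :=
  LinearMap.coprod (Finsupp.lsum ℂ fun r => f r ∘ₗ LinearMap.inl ℂ _ _)
    (LinearMap.coprod
      ((dR N).liftQ (Finsupp.lsum ℂ fun r => f r ∘ₗ LinearMap.inr ℂ _ _ ∘ₗ LinearMap.inl ℂ _ _)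
        (dR_le_ker f hf))
      (Finsupp.lsum ℂ fun r => f r ∘ₗ LinearMap.inr ℂ _ _ ∘ₗ LinearMap.inr ℂ _ _)) ∘ₗ
  T.e.toLinearMap

theorem lift_monomial (r : Idx N) (w : Coeff N g) :
    T.lift f hf (T.monomial r w) = f r w := by
  simp only [lift, monomial_apply, LinearMap.comp_apply, LinearEquiv.coe_coe,
    LinearEquiv.apply_symm_apply, LinearMap.coprod_apply, Submodule.mkQ_apply,
    Submodule.liftQ_apply, Finsupp.lsum_single, LinearMap.inl_apply, LinearMap.inr_apply]
  simp [← map_add]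

end HomExt

open scoped Matrix

/-- The coefficient of the bracket of `t^r w` and `t^m w'`, where `u` and `v` are the vectors
`r` and `m`. -/
def coeffBracket (B : g →ₗ[ℂ] g →ₗ[ℂ] ℂ) (μ ν : ℂ) (u v : Fin (N + 1) → ℂ) (w w' : Coeff N g) :
    Coeff N g :=
  (⁅w.1, w'.1⁆ + (w.2.2 ⬝ᵥ v) • w'.1 - (w'.2.2 ⬝ᵥ u) • w.1,
    B w.1 w'.1 • u
      + ((w.2.2 ⬝ᵥ v) • w'.2.1 + (w.2.2 ⬝ᵥ w'.2.1) • u)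
      - ((w'.2.2 ⬝ᵥ u) • w.2.1 + (w'.2.2 ⬝ᵥ w.2.1) • v)
      + (μ * (w.2.2 ⬝ᵥ v) * (w'.2.2 ⬝ᵥ u) + ν * (w.2.2 ⬝ᵥ u) * (w'.2.2 ⬝ᵥ v)) • v,
    (w.2.2 ⬝ᵥ v) • w'.2.2 - (w'.2.2 ⬝ᵥ u) • w.2.2)

namespace IsToroidal

variable {T} {B : g →ₗ[ℂ] g →ₗ[ℂ] ℂ} {μ ν : ℂ} (hT : T.IsToroidal B μ ν) (r m : Idx N)
include hT

theorem lie_kg (x : g) (κ : Fin (N + 1) → ℂ) :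
    ⁅T.monomial r (0, κ, 0), T.monomial m (x, 0, 0)⁆ = 0 := by
  rw [monomial_k, sum_lie, ← tg_eq]
  simp [hT.br_kg]

theorem lie_kk (κ κ' : Fin (N + 1) → ℂ) :
    ⁅T.monomial r (0, κ, 0), T.monomial m (0, κ', 0)⁆ = 0 := by
  rw [monomial_k, monomial_k, sum_lie_sum]
  simp [hT.br_kk]

theorem lie_gg (x y : g) : ⁅T.monomial r (x, 0, 0), T.monomial m (y, 0, 0)⁆ =
    T.monomial (r + m) (⁅x, y⁆, B x y • expVec r, 0) := by
  rw [← tg_eq, ← tg_eq, hT.br_gg, tg_eq, kSum_eq, ← map_smul, ← map_add]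
  simp

theorem lie_dg (x : g) (δ : Fin (N + 1) → ℂ) :
    ⁅T.monomial r (0, 0, δ), T.monomial m (x, 0, 0)⁆ =
      (δ ⬝ᵥ expVec m) • T.monomial (r + m) (x, 0, 0) := by
  rw [monomial_d, sum_lie, ← tg_eq, ← tg_eq]
  simp only [smul_lie, hT.br_dg, smul_smul, ← Finset.sum_smul, dotProduct, expVec_apply]

theorem lie_dk (δ κ : Fin (N + 1) → ℂ) : ⁅T.monomial r (0, 0, δ), T.monomial m (0, κ, 0)⁆ =
    (δ ⬝ᵥ expVec m) • T.monomial (r + m) (0, κ, 0) +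
      (δ ⬝ᵥ κ) • T.monomial (r + m) (0, expVec r, 0) := by
  have lie_smul_d_smul_k (a b) : ⁅δ a • T.d r a, κ b • T.k m b⁆ =
      (δ a * expVec m a) • κ b • T.k (r + m) b +
        (if a = b then δ a * κ b else 0) • T.kSum r m := by
    rw [smul_lie, lie_smul, hT.br_dk]
    split_ifs <;> simp only [expVec_apply] <;> module
  rw [monomial_d, monomial_k, sum_lie_sum, ← kSum_eq, monomial_k]
  simp only [lie_smul_d_smul_k, Finset.sum_add_distrib, ← Finset.sum_smul]
  congr 1
  · simp only [dotProduct, Finset.sum_smul_sum]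
  · simp [dotProduct]

theorem lie_dd (δ δ' : Fin (N + 1) → ℂ) :
    ⁅T.monomial r (0, 0, δ), T.monomial m (0, 0, δ')⁆ =
      (δ ⬝ᵥ expVec m) • T.monomial (r + m) (0, 0, δ')
        - (δ' ⬝ᵥ expVec r) • T.monomial (r + m) (0, 0, δ)
        + (μ * (δ ⬝ᵥ expVec m) * (δ' ⬝ᵥ expVec r) + ν * (δ ⬝ᵥ expVec r) * (δ' ⬝ᵥ expVec m)) •
          T.monomial (r + m) (0, expVec m, 0) := by
  have lie_smul_d_smul_d (a b) : ⁅δ a • T.d r a, δ' b • T.d m b⁆ =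
      (δ a * expVec m a) • δ' b • T.d (r + m) b - (δ' b * expVec r b) • δ a • T.d (r + m) a +
      (μ * ((δ a * expVec m a) * (δ' b * expVec r b)) +
        ν * ((δ a * expVec r a) * (δ' b * expVec m b))) •
        T.monomial (r + m) (0, expVec m, 0) := by
    rw [smul_lie, lie_smul, hT.br_dd, monomial_k]
    simp only [expVec_apply]
    module
  simp only [monomial_d, sum_lie_sum, lie_smul_d_smul_d, Finset.sum_add_distrib,
    Finset.sum_sub_distrib, ← Finset.sum_smul, mul_assoc μ, mul_assoc ν, dotProduct,
    Finset.sum_mul_sum]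
  congr 2
  · simp only [Finset.sum_smul_sum]
  · simp only [Finset.sum_smul, Finset.smul_sum]
  · simp only [Finset.mul_sum]

theorem lie_monomial (w w' : Coeff N g) : ⁅T.monomial r w, T.monomial m w'⁆ =
    T.monomial (r + m) (coeffBracket B μ ν (expVec r) (expVec m) w w') := by
  obtain ⟨x, κ, δ⟩ := w
  obtain ⟨x', κ', δ'⟩ := w'
  have lie_gk : ⁅T.monomial r (x, 0, 0), T.monomial m (0, κ', 0)⁆ = 0 := by
    rw [← lie_skew, hT.lie_kg, neg_zero]
  have lie_gd := hT.lie_dg m r x δ'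
  have lie_kd := hT.lie_dk m r δ' κ
  rw [← lie_skew, neg_eq_iff_eq_neg, add_comm m] at lie_gd lie_kd
  rw [monomial_eq_add _ r, monomial_eq_add _ m]
  simp only [add_lie, lie_add, hT.lie_gg, lie_gk, lie_gd, lie_kd, hT.lie_kg, hT.lie_kk, hT.lie_dg,
    hT.lie_dk, hT.lie_dd, add_zero, zero_add]
  simp only [← map_smul, ← map_add, ← map_sub, ← map_neg]
  congr 1
  refine Prod.ext ?_ (Prod.ext ?_ ?_) <;>
  · simp only [coeffBracket, Prod.fst_add, Prod.fst_sub, Prod.fst_neg, Prod.smul_fst, Prod.snd_add,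
      Prod.snd_sub, Prod.snd_neg, Prod.smul_snd]
    module

end IsToroidal

end Tor

/-! ### Necessity of the condition on the central character -/

theorem linearIndependent_of_pairwise_apply_eq_zero {ι R M M' : Type*} [Ring R] [IsDomain R]
    [AddCommGroup M] [Module R M] [AddCommGroup M'] [Module R M'] [Module.IsTorsionFree R M']
    (f : ι → M →ₗ[R] M') (x : ι → M) (hzero : Pairwise fun i j => f i (x j) = 0)
    (hne : ∀ i, f i (x i) ≠ 0) : LinearIndependent R x := by
  rw [linearIndependent_iff']
  intro s c hc i hi
  have apply_sum := congrArg (f i) hc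
  rw [map_sum, map_zero, Finset.sum_eq_single_of_mem i hi
    fun j _ hj => by rw [map_smul, hzero hj.symm, smul_zero], map_smul] at apply_sum
  exact (smul_eq_zero.1 apply_sum).resolve_right (hne i)

namespace Tor

open scoped Matrix

variable {N : ℕ} {g : Type} [LieRing g] [LieAlgebra ℂ g] {T : Tor N g}
  {B : g →ₗ[ℂ] g →ₗ[ℂ] ℂ} {μ ν : ℂ}

theorem IsToroidal.lie_d_monomial (hT : T.IsToroidal B μ ν) (j : Fin (N + 1)) (r : Idx N)
    (w : Coeff N g) : ⁅T.d 0 j, T.monomial r w⁆ = (r j : ℂ) • T.monomial r w := by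
  rw [d_eq, hT.lie_monomial, zero_add, ← map_smul]
  congr 1
  refine Prod.ext ?_ (Prod.ext ?_ ?_) <;> simp [coeffBracket]

variable {M : Type} [AddCommGroup M] [Module ℂ M] [LieRingModule T.G M] [LieModule ℂ T.G M]

theorem mem_wt {m : Fin (N + 1) → ℂ} {v : M} :
    v ∈ T.wt M m ↔ ∀ j, ⁅T.d 0 j, v⁆ = m j • v := by
  simp [wt, Submodule.mem_iInf]

theorem IsToroidal.monomial_lie_mem_wt (hT : T.IsToroidal B μ ν) {m : Fin (N + 1) → ℂ} {v : M}
    (hv : v ∈ T.wt M m) (r : Idx N) (w : Coeff N g) :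
    ⁅T.monomial r w, v⁆ ∈ T.wt M (m + expVec r) := by
  rw [mem_wt] at hv ⊢
  intro j
  rw [leibniz_lie, hT.lie_d_monomial, hv, smul_lie, lie_smul, Pi.add_apply, expVec_apply]
  module

theorem k_single_eq_zero (j : Fin (N + 1)) {n : ℤ} (hn : n ≠ 0) : T.k (Pi.single j n) j = 0 := by
  have exact_form := T.monomial_expVec (Pi.single j n)
  rw [expVec_single, monomial_k] at exact_form
  simpa [Pi.single_apply, hn] using exact_form

theorem IsToroidal.lie_d_k_single (hT : T.IsToroidal B μ ν) {j : Fin (N + 1)} (hj : j ≠ 0)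
    (t n n' : ℤ) :
    ⁅T.d (Pi.single 0 t + Pi.single j n) 0, T.k (-(Pi.single 0 t + Pi.single j n')) 0⁆ =
      if n = n' then (n : ℂ) • T.k 0 j else 0 := by
  have exponent_eq : (Pi.single 0 t + Pi.single j n + -(Pi.single 0 t + Pi.single j n') : Idx N) =
      Pi.single j (n - n') := by
    rw [Pi.single_sub]; abel
  have lie_eq : ⁅T.d (Pi.single 0 t + Pi.single j n) 0, T.k (-(Pi.single 0 t + Pi.single j n')) 0⁆ =
      (n : ℂ) • T.k (Pi.single j (n - n')) j := by
    rw [hT.br_dk, if_pos rfl, one_smul, kSum, exponent_eq]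
    simp [Pi.single_apply, hj.symm, add_smul, Finset.sum_add_distrib]
  rw [lie_eq]
  split_ifs with h
  · rw [h, sub_self, Pi.single_zero]
  · rw [k_single_eq_zero j (sub_ne_zero.2 h), smul_zero]

namespace InCat

variable {χ : Fin (N + 1) → ℂ} {l : Fin (N + 1) → ℂ} {j : Fin (N + 1)}

theorem exists_wt_ne_bot (h : T.InCat M χ) [Nontrivial M] :
    ∃ l : Fin (N + 1) → ℂ, T.wt M l ≠ ⊥ ∧ ∀ m : Fin (N + 1) → ℂ,
      m 0 = l 0 + 1 → T.wt M m = ⊥ := by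
  obtain ⟨b, hb⟩ := h.b4
  let S : Set ℝ := {x | ∃ m, T.wt M m ≠ ⊥ ∧ (m 0).re = x}
  have bddAbove : BddAbove S := ⟨b, by rintro _ ⟨m, hm, rfl⟩; exact hb m hm⟩
  have nonempty : S.Nonempty := by
    by_contra! hS
    have wt_eq_bot (m) : T.wt M m = ⊥ := by
      by_contra hm
      exact Set.notMem_empty _ (hS ▸ ⟨m, hm, rfl⟩ : (m 0).re ∈ (∅ : Set ℝ))
    simpa [wt_eq_bot] using h.b1_spans
  obtain ⟨_, ⟨l, hl, rfl⟩, hlt⟩ := exists_lt_of_lt_csSup nonempty (sub_one_lt (sSup S))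
  refine ⟨l, hl, fun m hm => ?_⟩
  by_contra hne
  have re_le := le_csSup bddAbove ⟨m, hne, rfl⟩
  rw [hm, Complex.add_re, Complex.one_re] at re_le
  linarith

theorem wt_add_single_ne_bot (hT : T.IsToroidal B μ ν) (h : T.InCat M χ) (hj : j ≠ 0)
    (hχ : χ j ≠ 0) (hl : T.wt M l ≠ ⊥) {n : ℤ} (hn : n ≠ 0) :
    T.wt M (l + expVec (Pi.single j n)) ≠ ⊥ ∨ T.wt M (l + expVec (Pi.single j (-n))) ≠ ⊥ := by
  by_contra! hbot
  obtain ⟨v, hv, hv0⟩ := (Submodule.ne_bot_iff _).1 hl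
  have lie_d : ⁅T.d (Pi.single j n) 0, v⁆ = 0 := by
    rw [← Submodule.mem_bot ℂ, ← hbot.1, d_eq]
    exact hT.monomial_lie_mem_wt hv _ _
  have lie_k : ⁅T.k (-Pi.single j n) 0, v⁆ = 0 := by
    rw [← Submodule.mem_bot ℂ, ← hbot.2, k_eq, Pi.single_neg]
    exact hT.monomial_lie_mem_wt hv _ _
  have heisenberg := hT.lie_d_k_single hj 0 n n
  rw [Pi.single_zero, zero_add, if_pos rfl] at heisenberg
  have smul_eq_zero : ((n : ℂ) * χ j) • v = 0 := by
    rw [mul_smul, ← h.b3, ← smul_lie, ← heisenberg, lie_lie, lie_d, lie_k, lie_zero, lie_zero,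
      sub_zero]
  simp [hn, hχ, hv0] at smul_eq_zero

theorem finite_wt_add_single_ne_bot (hT : T.IsToroidal B μ ν) (h : T.InCat M χ) (hj : j ≠ 0)
    (hχ : χ j ≠ 0) (htop : ∀ m : Fin (N + 1) → ℂ, m 0 = l 0 + 1 → T.wt M m = ⊥) :
    {n : ℤ | n ≠ 0 ∧ T.wt M (l + expVec (Pi.single j n)) ≠ ⊥}.Finite := by
  set S := {n : ℤ | n ≠ 0 ∧ T.wt M (l + expVec (Pi.single j n)) ≠ ⊥}
  choose v hv hv0 using fun n : S => (Submodule.ne_bot_iff _).1 n.2.2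
  let r (n : S) : Idx N := Pi.single 0 1 + Pi.single j n
  have lie_k_mem (n : S) : ⁅T.k (-r n) 0, v n⁆ ∈ T.wt M (l - expVec (Pi.single 0 1)) := by
    convert hT.monomial_lie_mem_wt (hv n) (-r n) (0, Pi.single 0 1, 0) using 2
    · rw [map_neg, map_add]; abel
    · rw [k_eq]
  have lie_d_eq_zero (n n' : S) : ⁅T.d (r n) 0, v n'⁆ = 0 := by
    rw [← Submodule.mem_bot ℂ, d_eq,
      ← htop (l + expVec (Pi.single j n') + expVec (r n)) (by simp [r, hj.symm])]
    exact hT.monomial_lie_mem_wt (hv n') _ _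
  have lie_d_lie_k (n n' : S) : ⁅T.d (r n) 0, ⁅T.k (-r n') 0, v n'⁆⁆ =
      if n = n' then ((n : ℂ) * χ j) • v n' else 0 := by
    rw [leibniz_lie, lie_d_eq_zero, lie_zero, add_zero, hT.lie_d_k_single hj]
    simp only [Subtype.coe_inj]
    split_ifs
    · rw [smul_lie, h.b3, smul_smul]
    · rw [zero_lie]
  have linearIndependent : LinearIndependent ℂ fun n : S => ⁅T.k (-r n) 0, v n⁆ := by
    refine linearIndependent_of_pairwise_apply_eq_zero
      (fun n => LieModule.toEnd ℂ T.G M (T.d (r n) 0)) _ (fun n n' hn => ?_) fun n => ?_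
    · simp [lie_d_lie_k, hn]
    · simpa [lie_d_lie_k, hχ, hv0] using n.2.1
  have := h.b2 (l - expVec (Pi.single 0 1))
  have linearIndependent_wt : LinearIndependent ℂ
      fun n : S => (⟨_, lie_k_mem n⟩ : T.wt M (l - expVec (Pi.single 0 1))) :=
    .of_comp (Submodule.subtype _) linearIndependent
  exact Set.finite_coe_iff.1 linearIndependent_wt.finite

theorem char_eq_zero (hT : T.IsToroidal B μ ν) (h : T.InCat M χ) [Nontrivial M] (hj : j ≠ 0) :
    χ j = 0 := by
  by_contra hχ
  obtain ⟨l, hl, htop⟩ := h.exists_wt_ne_bot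
  have finite := h.finite_wt_add_single_ne_bot hT hj hχ htop
  refine (Set.finite_singleton (0 : ℤ)).infinite_compl
    ((finite.union (finite.preimage neg_injective.injOn)).subset fun n hn => ?_)
  exact (h.wt_add_single_ne_bot hT hj hχ hl hn).imp (⟨hn, ·⟩) (⟨neg_ne_zero.2 hn, ·⟩)

end InCat

end Tor

/-! ### The module coinduced from the top -/

set_option maxSynthPendingDepth 3

namespace Tor

open scoped Matrix

variable {N : ℕ} {g : Type} [LieRing g] [LieAlgebra ℂ g] (T : Tor N g)
  {B : g →ₗ[ℂ] g →ₗ[ℂ] ℂ} {μ ν : ℂ}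

/-- The sum of the homogeneous components of the toroidal algebra whose `t₀`-degree satisfies
`P`. -/
def degPart (P : ℤ → Prop) : Submodule ℂ T.G :=
  Submodule.span ℂ {z | ∃ r w, P (r 0) ∧ z = T.monomial r w}

variable {T}

theorem monomial_mem_degPart {P : ℤ → Prop} {r : Idx N} (h : P (r 0)) (w : Coeff N g) :
    T.monomial r w ∈ T.degPart P := Submodule.subset_span ⟨r, w, h, rfl⟩

theorem degPart_le {P : ℤ → Prop} {S : Submodule ℂ T.G}
    (h : ∀ r w, P (r 0) → T.monomial r w ∈ S) : T.degPart P ≤ S :=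
  Submodule.span_le.2 fun _ ⟨r, w, hr, hz⟩ => hz ▸ h r w hr

theorem eq_top_of_monomial_mem {S : Submodule ℂ T.G} (h : ∀ r w, T.monomial r w ∈ S) : S = ⊤ :=
  top_le_iff.1 <| T.span_monomial.symm.trans_le <|
    Submodule.span_le.2 fun _ ⟨r, w, hz⟩ => hz ▸ h r w

theorem IsToroidal.lie_mem_degPart (hT : T.IsToroidal B μ ν) {P Q R : ℤ → Prop}
    (h : ∀ a b, P a → Q b → R (a + b)) {x y : T.G} (hx : x ∈ T.degPart P)
    (hy : y ∈ T.degPart Q) : ⁅x, y⁆ ∈ T.degPart R := by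
  refine LinearMap.BilinMap.apply_apply_mem_of_mem_span (T.degPart R) _ _
    (LieModule.toEnd ℂ T.G T.G).toLinearMap ?_ x y hx hy
  rintro _ ⟨r, w, hr, rfl⟩ _ ⟨m, w', hm, rfl⟩
  change ⁅T.monomial r w, T.monomial m w'⁆ ∈ _
  rw [hT.lie_monomial]
  exact monomial_mem_degPart (h _ _ hr hm) _

/-- The Lie subalgebra of elements of positive `t₀`-degree. -/
def posSubalgebra (hT : T.IsToroidal B μ ν) : LieSubalgebra ℂ T.G where
  toSubmodule := T.degPart (1 ≤ ·)
  lie_mem' hx hy := hT.lie_mem_degPart (fun _ _ h h' => by lia) hx hy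

variable (T) in
/-- The projection onto the part of positive `t₀`-degree along the part of nonpositive degree. -/
def posProj : T.G →ₗ[ℂ] T.degPart (1 ≤ ·) :=
  T.lift (fun r => if h : 1 ≤ r 0 then
    (T.monomial r).codRestrict (T.degPart (1 ≤ ·)) (monomial_mem_degPart h) else 0) fun r => by
      split_ifs
      · exact Subtype.ext (T.monomial_expVec r)
      · rfl

theorem posProj_monomial_of_pos {r : Idx N} (hr : 1 ≤ r 0) (w : Coeff N g) :
    (T.posProj (T.monomial r w) : T.G) = T.monomial r w := by
  rw [posProj, lift_monomial, dif_pos hr]; rfl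

theorem posProj_monomial_of_nonpos {r : Idx N} (hr : r 0 ≤ 0) (w : Coeff N g) :
    T.posProj (T.monomial r w) = 0 := by
  rw [posProj, lift_monomial, dif_neg (by lia)]; rfl

theorem posProj_coe {x : T.G} (hx : x ∈ T.degPart (1 ≤ ·)) : (T.posProj x : T.G) = x :=
  degPart_le (S := LinearMap.eqLocus ((T.degPart (1 ≤ ·)).subtype ∘ₗ T.posProj) .id)
    (fun _ w hr => posProj_monomial_of_pos hr w) hx

theorem ker_posProj : T.posProj.ker = T.degPart (· ≤ 0) := by
  refine le_antisymm (fun x hx => ?_) (degPart_le fun r w hr => posProj_monomial_of_nonpos hr w)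
  let complProj : T.G →ₗ[ℂ] T.G := .id - (T.degPart (1 ≤ ·)).subtype ∘ₗ T.posProj
  have complProj_mem : (T.degPart (· ≤ 0)).comap complProj = ⊤ := by
    refine eq_top_of_monomial_mem fun r w => ?_
    change T.monomial r w - (T.posProj (T.monomial r w) : T.G) ∈ T.degPart (· ≤ 0)
    rcases le_or_gt (r 0) 0 with hr | hr
    · rw [posProj_monomial_of_nonpos hr, ZeroMemClass.coe_zero, sub_zero]
      exact monomial_mem_degPart hr w
    · rw [posProj_monomial_of_pos hr, sub_self]
      exact zero_mem _
  simpa [complProj, LinearMap.mem_ker.1 hx] using Submodule.eq_top_iff'.1 complProj_mem x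

theorem posProj_eq_zero_iff {x : T.G} : T.posProj x = 0 ↔ x ∈ T.degPart (· ≤ 0) := by
  rw [← ker_posProj, LinearMap.mem_ker]

end Tor

/-- The space of Laurent polynomials in `t₁, …, t_N`, from which a module of the category is
coinduced. -/
abbrev TopSpace (N : ℕ) := (Fin N → ℤ) →₀ ℂ

/-- The exponent of a Laurent polynomial in `t₁, …, t_N` as a multi-index of `t₀`-degree zero. -/
def consZero {N : ℕ} (s : Fin N → ℤ) : Idx N := Fin.cons 0 s

theorem consZero_tail_add {N : ℕ} {r : Idx N} (h : r 0 = 0) (s : Fin N → ℤ) :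
    consZero (Fin.tail r + s) = r + consZero s := by
  ext p
  refine Fin.cases ?_ (fun i => ?_) p
  · simp [consZero, h]
  · simp [consZero, Fin.tail]

namespace Tor

open scoped Matrix

variable {N : ℕ} {g : Type} [LieRing g] [LieAlgebra ℂ g] (T : Tor N g)
  {B : g →ₗ[ℂ] g →ₗ[ℂ] ℂ} {μ ν : ℂ} (χ : Fin (N + 1) → ℂ)

/-- The scalar by which the coefficient of a monomial of `t₀`-degree zero acts on `t^s`. -/
def topScalar (s : Fin N → ℤ) : Coeff N g →ₗ[ℂ] ℂ :=
  (dotProductBilin ℂ ℂ χ).coprod (dotProductBilin ℂ ℂ (expVec (consZero s))) ∘ₗ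
    LinearMap.snd ℂ g _

theorem topScalar_apply (s : Fin N → ℤ) (w : Coeff N g) :
    topScalar χ s w = χ ⬝ᵥ w.2.1 + expVec (consZero s) ⬝ᵥ w.2.2 := rfl

/-- The operator on the top by which `t^r w` acts when `r 0 = 0`. -/
def topMonomial (r : Idx N) : Coeff N g →ₗ[ℂ] Module.End ℂ (TopSpace N) :=
  (Finsupp.lsum ℂ).toLinearMap ∘ₗ
    LinearMap.pi fun s => (topScalar χ s).smulRight (Finsupp.lsingle (Fin.tail r + s))

theorem topMonomial_single (r : Idx N) (w : Coeff N g) (s : Fin N → ℤ) (c : ℂ) :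
    topMonomial χ r w (Finsupp.single s c) =
      Finsupp.single (Fin.tail r + s) (topScalar χ s w * c) := by
  simp [topMonomial]

section Action

variable {χ} (hχ : ∀ j, j ≠ 0 → χ j = 0)
include hχ

theorem dotProduct_expVec_eq_zero {r : Idx N} (hr : r 0 = 0) : χ ⬝ᵥ expVec r = 0 := by
  refine Finset.sum_eq_zero fun j _ => ?_
  by_cases h : j = 0
  · simp [h, hr]
  · simp [hχ j h]

/-- The action on the top of the elements of `t₀`-degree zero, extended by zero. -/
def topAction : T.G →ₗ[ℂ] Module.End ℂ (TopSpace N) :=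
  T.lift (X := Module.End ℂ (TopSpace N))
    (fun r => if r 0 = 0 then topMonomial χ r else 0) fun r => by
    split_ifs with h
    · ext1 s
      ext1
      simp [topMonomial_single, topScalar_apply, dotProduct_expVec_eq_zero hχ h]
    · rfl

variable {T}

theorem topAction_monomial {r : Idx N} (hr : r 0 = 0) (w : Coeff N g) :
    T.topAction hχ (T.monomial r w) = topMonomial χ r w := by
  rw [topAction, lift_monomial, if_pos hr]

theorem topAction_monomial_of_ne {r : Idx N} (hr : r 0 ≠ 0) (w : Coeff N g) :
    T.topAction hχ (T.monomial r w) = 0 := by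
  rw [topAction, lift_monomial, if_neg hr]; rfl

theorem topAction_of_pos {x : T.G} (hx : x ∈ T.degPart (1 ≤ ·)) : T.topAction hχ x = 0 :=
  degPart_le (S := (T.topAction hχ).ker)
    (fun _ w hr => topAction_monomial_of_ne hχ (by lia) w) hx

theorem topScalar_coeffBracket {r m : Idx N} (hr : r 0 = 0) (hm : m 0 = 0) (w w' : Coeff N g)
    (s : Fin N → ℤ) : topScalar χ s (coeffBracket B μ ν (expVec r) (expVec m) w w') =
      topScalar χ (Fin.tail m + s) w * topScalar χ s w' -
        topScalar χ (Fin.tail r + s) w' * topScalar χ s w := by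
  simp only [topScalar_apply, coeffBracket, consZero_tail_add hr, consZero_tail_add hm,
    map_add, dotProduct_add, dotProduct_sub, dotProduct_smul, add_dotProduct,
    dotProduct_expVec_eq_zero hχ hr, dotProduct_expVec_eq_zero hχ hm, smul_eq_mul]
  rw [dotProduct_comm (expVec r), dotProduct_comm (expVec m)]
  ring

theorem topMonomial_coeffBracket {r m : Idx N} (hr : r 0 = 0) (hm : m 0 = 0) (w w' : Coeff N g) :
    topMonomial χ (r + m) (coeffBracket B μ ν (expVec r) (expVec m) w w') =
      topMonomial χ r w * topMonomial χ m w' - topMonomial χ m w' * topMonomial χ r w := by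
  ext1 s
  ext1
  have exponent_eq : Fin.tail (r + m) + s = Fin.tail r + (Fin.tail m + s) := by
    rw [← add_assoc]; rfl
  simp only [LinearMap.comp_apply, Finsupp.lsingle_apply, LinearMap.sub_apply,
    Module.End.mul_apply, topMonomial_single, mul_one, exponent_eq,
    add_left_comm (Fin.tail m), ← Finsupp.single_sub, topScalar_coeffBracket hχ hr hm]

theorem IsToroidal.topAction_lie (hT : T.IsToroidal B μ ν) {x y : T.G}
    (hx : x ∈ T.degPart (· ≤ 0)) (hy : y ∈ T.degPart (· ≤ 0)) : T.topAction hχ ⁅x, y⁆ =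
      T.topAction hχ x * T.topAction hχ y - T.topAction hχ y * T.topAction hχ x := by
  let product : T.G →ₗ[ℂ] T.G →ₗ[ℂ] Module.End ℂ (TopSpace N) :=
    (LinearMap.mul ℂ (Module.End ℂ (TopSpace N))).compl₁₂ (T.topAction hχ) (T.topAction hχ)
  let defect : T.G →ₗ[ℂ] T.G →ₗ[ℂ] Module.End ℂ (TopSpace N) :=
    (LieModule.toEnd ℂ T.G T.G).toLinearMap.compr₂ (T.topAction hχ) - (product - product.flip)
  suffices defect x y ∈ (⊥ : Submodule ℂ _) from sub_eq_zero.1 this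
  refine LinearMap.BilinMap.apply_apply_mem_of_mem_span _ _ _ defect ?_ x y hx hy
  rintro _ ⟨r, w, hr, rfl⟩ _ ⟨m, w', hm, rfl⟩
  refine sub_eq_zero.2 (?_ : T.topAction hχ ⁅T.monomial r w, T.monomial m w'⁆ =
    T.topAction hχ (T.monomial r w) * T.topAction hχ (T.monomial m w') -
      T.topAction hχ (T.monomial m w') * T.topAction hχ (T.monomial r w))
  rw [hT.lie_monomial]
  by_cases hr0 : r 0 = 0
  · by_cases hm0 : m 0 = 0
    · rw [topAction_monomial hχ (by rw [Pi.add_apply, hr0, hm0, add_zero]),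
        topAction_monomial hχ hr0, topAction_monomial hχ hm0, topMonomial_coeffBracket hχ hr0 hm0]
    · rw [topAction_monomial_of_ne hχ (by rw [Pi.add_apply]; lia),
        topAction_monomial_of_ne hχ hm0, mul_zero, zero_mul, sub_zero]
  · rw [topAction_monomial_of_ne hχ (by rw [Pi.add_apply]; lia),
      topAction_monomial_of_ne hχ hr0, mul_zero, zero_mul, sub_zero]

/-- The datum for coinducing the top from the subalgebra of elements of nonpositive
`t₀`-degree. -/
def topDatum (hT : T.IsToroidal B μ ν) : CoinductionDatum ℂ T.G (TopSpace N) where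
  compl := posSubalgebra hT
  proj := T.posProj
  rep := T.topAction hχ
  proj_coe y := Subtype.ext (posProj_coe y.2)
  rep_coe y := topAction_of_pos hχ y.2
  proj_lie x y hx hy := posProj_eq_zero_iff.2 <| hT.lie_mem_degPart (fun _ _ h h' => by lia)
    (posProj_eq_zero_iff.1 hx) (posProj_eq_zero_iff.1 hy)
  rep_lie x y hx hy :=
    hT.topAction_lie hχ (posProj_eq_zero_iff.1 hx) (posProj_eq_zero_iff.1 hy)

end Action

end Tor

/-! ### Words applied to the top -/

theorem mem_span_image_of_iSupIndep {R M κ I : Type*} [Ring R] [AddCommGroup M] [Module R M]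
    {p : κ → Submodule R M} (hp : iSupIndep p) {X : I → M} {ω : I → κ} (hX : ∀ i, X i ∈ p (ω i))
    {m : κ} {v : M} (hv : v ∈ p m) (hspan : v ∈ Submodule.span R (Set.range X)) :
    v ∈ Submodule.span R (X '' {i | ω i = m}) := by
  rw [← Set.image_univ, ← Set.union_compl_self {i | ω i = m}, Set.image_union, Submodule.span_union,
    Submodule.mem_sup] at hspan
  obtain ⟨a, ha, b, hb, rfl⟩ := hspan
  have a_mem : a ∈ p m := by
    refine Submodule.span_le.2 ?_ ha
    rintro _ ⟨i, rfl, rfl⟩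
    exact hX i
  have b_mem : b ∈ ⨆ (m') (_ : m' ≠ m), p m' := by
    refine Submodule.span_le.2 ?_ hb
    rintro _ ⟨i, hi, rfl⟩
    exact Submodule.mem_iSup_of_mem (ω i) (Submodule.mem_iSup_of_mem hi (hX i))
  have b_eq_zero : b = 0 :=
    Submodule.disjoint_def.1 (hp m) b ((Submodule.add_mem_iff_right _ a_mem).1 hv) b_mem
  rwa [b_eq_zero, add_zero]

namespace Tor

open scoped Matrix

variable {N : ℕ} {g : Type} [LieRing g] [LieAlgebra ℂ g] {T : Tor N g}
  {B : g →ₗ[ℂ] g →ₗ[ℂ] ℂ} {μ ν : ℂ}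

theorem IsToroidal.iSupIndep_wt (hT : T.IsToroidal B μ ν) {M : Type} [AddCommGroup M] [Module ℂ M]
    [LieRingModule T.G M] [LieModule ℂ T.G M] : iSupIndep fun m => T.wt M m := by
  have commute_d (i j) : Commute (LieModule.toEnd ℂ T.G M (T.d 0 i))
      (LieModule.toEnd ℂ T.G M (T.d 0 j)) := by
    refine LinearMap.ext fun v => ?_
    change ⁅T.d 0 i, ⁅T.d 0 j, v⁆⁆ = ⁅T.d 0 j, ⁅T.d 0 i, v⁆⁆
    rw [leibniz_lie, d_eq T 0 j, hT.lie_d_monomial]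
    simp
  refine (Module.End.independent_iInf_maxGenEigenspace_of_forall_mapsTo
    (fun j => LieModule.toEnd ℂ T.G M (T.d 0 j)) fun i j φ =>
      Module.End.mapsTo_maxGenEigenspace_of_comm (commute_d j i) φ).mono fun m =>
        iInf_mono fun j => (Module.End.genEigenspace _ _).mono le_top

section SpannedByWeightVectors

variable {M : Type} [AddCommGroup M] [Module ℂ M] [LieRingModule T.G M] [LieModule ℂ T.G M]
  {W : LieSubmodule ℂ T.G M} {I : Type*} {X : I → M} {ω : I → Fin (N + 1) → ℂ}

theorem mem_wt_coe {m : Fin (N + 1) → ℂ} {v : W} : v ∈ T.wt W m ↔ (v : M) ∈ T.wt M m := by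
  simp only [mem_wt, Subtype.ext_iff, LieSubmodule.coe_bracket, LieSubmodule.coe_smul]

variable (hW : W.toSubmodule = Submodule.span ℂ (Set.range X)) (hX : ∀ i, X i ∈ T.wt M (ω i))
include hW hX

theorem iSup_wt_eq_top : ⨆ m, T.wt W m = ⊤ := by
  have le_map : W.toSubmodule ≤ (⨆ m, T.wt W m).map W.toSubmodule.subtype := by
    refine hW.trans_le (Submodule.span_le.2 ?_)
    rintro _ ⟨i, rfl⟩
    have mem_W : X i ∈ W.toSubmodule := hW ▸ Submodule.subset_span ⟨i, rfl⟩
    exact ⟨⟨X i, mem_W⟩, Submodule.mem_iSup_of_mem (ω i) (mem_wt_coe.2 (hX i)), rfl⟩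
  refine Submodule.eq_top_iff'.2 fun v => ?_
  obtain ⟨w, hw, hwv⟩ := le_map v.2
  exact Subtype.ext hwv ▸ hw

variable (hT : T.IsToroidal B μ ν)
include hT

theorem IsToroidal.mem_span_image_of_mem_wt {m : Fin (N + 1) → ℂ} {v : W} (hv : v ∈ T.wt W m) :
    (v : M) ∈ Submodule.span ℂ (X '' {i | ω i = m}) :=
  mem_span_image_of_iSupIndep hT.iSupIndep_wt hX (mem_wt_coe.1 hv) (hW ▸ v.2)

theorem IsToroidal.re_le_of_wt_ne_bot {C : ℝ} (hC : ∀ i, (ω i 0).re ≤ C) {m : Fin (N + 1) → ℂ}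
    (hm : T.wt W m ≠ ⊥) : (m 0).re ≤ C := by
  obtain ⟨v, hv, hv0⟩ := (Submodule.ne_bot_iff _).1 hm
  by_contra! hlt
  have no_vector : {i | ω i = m} = ∅ :=
    Set.eq_empty_of_forall_notMem fun i (hi : ω i = m) => hlt.not_ge (hi ▸ hC i)
  have v_mem := hT.mem_span_image_of_mem_wt hW hX hv
  rw [no_vector, Set.image_empty, Submodule.span_empty, Submodule.mem_bot] at v_mem
  exact hv0 (Subtype.ext v_mem)

theorem IsToroidal.inCat_of_span {χ : Fin (N + 1) → ℂ}
    (hfin : ∀ m, FiniteDimensional ℂ (Submodule.span ℂ (X '' {i | ω i = m})))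
    (hk : ∀ j (v : M), ⁅T.k 0 j, v⁆ = χ j • v) {C : ℝ} (hC : ∀ i, (ω i 0).re ≤ C) :
    T.InCat W χ where
  b1_indep := hT.iSupIndep_wt
  b1_spans := iSup_wt_eq_top hW hX
  b2 m := by
    have := hfin m
    let inclusion : T.wt W m →ₗ[ℂ] Submodule.span ℂ (X '' {i | ω i = m}) :=
      (W.toSubmodule.subtype ∘ₗ (T.wt W m).subtype).codRestrict _
        fun v => hT.mem_span_image_of_mem_wt hW hX v.2
    refine FiniteDimensional.of_injective inclusion fun v w h => ?_
    have coe_eq : (inclusion v : M) = inclusion w := by rw [h]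
    exact Subtype.ext (Subtype.ext coe_eq)
  b3 j v := Subtype.ext (hk j v)
  b4 := ⟨C, fun _ hm => hT.re_le_of_wt_ne_bot hW hX hC hm⟩

end SpannedByWeightVectors

theorem degPart_eq_span_basis {ι : Type*} (b : Module.Basis ι ℂ (Coeff N g)) (P : ℤ → Prop) :
    T.degPart P =
      Submodule.span ℂ {z | ∃ (r : Idx N) (i : ι), P (r 0) ∧ z = T.monomial r (b i)} := by
  refine le_antisymm (degPart_le fun r w hr => ?_) (Submodule.span_mono ?_)
  · suffices Submodule.span ℂ (Set.range b) ≤ (Submodule.span ℂ _).comap (T.monomial r) from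
      this (b.mem_span w)
    exact Submodule.span_le.2 (Set.range_subset_iff.2 fun i =>
      Submodule.subset_span ⟨r, i, hr, rfl⟩)
  · rintro _ ⟨r, i, hr, rfl⟩
    exact ⟨r, b i, hr, rfl⟩

section WordModule

variable {χ : Fin (N + 1) → ℂ} (hχ : ∀ j, j ≠ 0 → χ j = 0) (hT : T.IsToroidal B μ ν)
  {ι : Type} (b : Module.Basis ι ℂ (Coeff N g))

/-- The vector of the coinduced module obtained by applying the letters `(r, i)` of a word, standing
for `t^r b_i`, to the vacuum vector of `t^s`, the last letter first. -/
def word (l : List (Idx N × ι)) (s : Fin N → ℤ) : (topDatum hχ hT).Coind :=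
  l.foldr (fun x v => ⁅T.monomial x.1 (b x.2), v⁆) ((topDatum hχ hT).vac (Finsupp.single s 1))

/-- The exponent of the product of the monomials of a word. -/
def wordDegree (l : List (Idx N × ι)) : Idx N := (l.map Prod.fst).sum

variable (N ι) in
/-- The index type of the spanning vectors of the module of the category: words in letters of
negative `t₀`-degree, paired with the exponent of the vacuum vector they are applied to. -/
abbrev NegWord : Type :=
  {l : List (Idx N × ι) // ∀ x ∈ l, x.1 0 < 0} × (Fin N → ℤ)

/-- The weight of the vector indexed by a word. -/
def NegWord.weight (i : NegWord N ι) : Fin (N + 1) → ℂ :=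
  expVec (wordDegree i.1.1 + consZero i.2)

/-- The vector indexed by a word. -/
def negWord (i : NegWord N ι) : (topDatum hχ hT).Coind := word hχ hT b i.1.1 i.2

variable {hχ hT b}

theorem word_nil (s : Fin N → ℤ) :
    word hχ hT b [] s = (topDatum hχ hT).vac (Finsupp.single s 1) := rfl

theorem word_cons (x : Idx N × ι) (l : List (Idx N × ι)) (s : Fin N → ℤ) :
    word hχ hT b (x :: l) s = ⁅T.monomial x.1 (b x.2), word hχ hT b l s⁆ := rfl

theorem word_mem_span {l : List (Idx N × ι)} (hl : ∀ x ∈ l, x.1 0 < 0) (s : Fin N → ℤ) :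
    word hχ hT b l s ∈ Submodule.span ℂ (Set.range (negWord hχ hT b)) :=
  Submodule.subset_span ⟨(⟨l, hl⟩, s), rfl⟩

theorem lie_vac_of_pos {r : Idx N} (hr : 1 ≤ r 0) (w : Coeff N g) (v : TopSpace N) :
    ⁅T.monomial r w, (topDatum hχ hT).vac v⁆ = 0 :=
  CoinductionDatum.lie_vac_of_mem (c := topDatum hχ hT) (monomial_mem_degPart hr w) v

theorem lie_vac_single {r : Idx N} (hr : r 0 = 0) (w : Coeff N g) (s : Fin N → ℤ) :
    ⁅T.monomial r w, (topDatum hχ hT).vac (Finsupp.single s 1)⁆ =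
      topScalar χ s w • (topDatum hχ hT).vac (Finsupp.single (Fin.tail r + s) 1) := by
  have lie_mem (y) (hy : y ∈ (topDatum hχ hT).compl) :
      ⁅y, T.monomial r w⁆ ∈ (topDatum hχ hT).compl :=
    hT.lie_mem_degPart (Q := (· = 0)) (fun _ _ h h' => by lia) hy (monomial_mem_degPart hr w)
  have rep_single : (topDatum hχ hT).rep (T.monomial r w) (Finsupp.single s 1) =
      topScalar χ s w • Finsupp.single (Fin.tail r + s) 1 := by
    rw [Finsupp.smul_single, smul_eq_mul, ← topMonomial_single, ← topAction_monomial hχ hr]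
    rfl
  rw [CoinductionDatum.lie_vac (posProj_monomial_of_nonpos hr.le w) lie_mem, rep_single, map_smul]

theorem lie_mem_span_of_neg {x : T.G} (hx : x ∈ T.degPart (· < 0)) {v : (topDatum hχ hT).Coind}
    (hv : v ∈ Submodule.span ℂ (Set.range (negWord hχ hT b))) :
    ⁅x, v⁆ ∈ Submodule.span ℂ (Set.range (negWord hχ hT b)) := by
  rw [degPart_eq_span_basis b] at hx
  refine LinearMap.BilinMap.apply_apply_mem_of_mem_span _ _ _
    (LieModule.toEnd ℂ T.G (topDatum hχ hT).Coind).toLinearMap ?_ x v hx hv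
  rintro _ ⟨r, i, hr, rfl⟩ _ ⟨⟨⟨l, hl⟩, s⟩, rfl⟩
  exact word_mem_span (l := (r, i) :: l) (List.forall_mem_cons.2 ⟨hr, hl⟩) s

theorem lie_vac_single_mem_span (x : T.G) (s : Fin N → ℤ) :
    ⁅x, (topDatum hχ hT).vac (Finsupp.single s 1)⁆ ∈
      Submodule.span ℂ (Set.range (negWord hχ hT b)) := by
  have vac_mem (s) : (topDatum hχ hT).vac (Finsupp.single s 1) ∈
      Submodule.span ℂ (Set.range (negWord hχ hT b)) :=
    word_mem_span (l := []) (List.forall_mem_nil _) s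
  refine Submodule.eq_top_iff'.1 (eq_top_of_monomial_mem
    (S := (Submodule.span ℂ (Set.range (negWord hχ hT b))).comap
      ((LieModule.toEnd ℂ T.G (topDatum hχ hT).Coind).toLinearMap.flip
        ((topDatum hχ hT).vac (Finsupp.single s 1)))) fun r w => ?_) x
  change ⁅T.monomial r w, (topDatum hχ hT).vac (Finsupp.single s 1)⁆ ∈ Submodule.span _ _
  rcases lt_trichotomy (r 0) 0 with hr | hr | hr
  · exact lie_mem_span_of_neg (monomial_mem_degPart hr w) (vac_mem s)
  · rw [lie_vac_single hr]
    exact Submodule.smul_mem _ _ (vac_mem _)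
  · rw [lie_vac_of_pos hr]
    exact zero_mem _

theorem lie_word_mem_span {l : List (Idx N × ι)} (hl : ∀ x ∈ l, x.1 0 < 0) (s : Fin N → ℤ)
    (x : T.G) : ⁅x, word hχ hT b l s⁆ ∈ Submodule.span ℂ (Set.range (negWord hχ hT b)) := by
  induction l generalizing x with
  | nil => exact lie_vac_single_mem_span x s
  | cons y l ih =>
    obtain ⟨hy, hl⟩ := List.forall_mem_cons.1 hl
    rw [word_cons, leibniz_lie]
    exact add_mem (ih hl _) (lie_mem_span_of_neg (monomial_mem_degPart hy _) (ih hl _))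

variable (hχ hT b) in
/-- The submodule of the coinduced module generated by the vacuum vectors. -/
def wordModule : LieSubmodule ℂ T.G (topDatum hχ hT).Coind where
  __ := Submodule.span ℂ (Set.range (negWord hχ hT b))
  lie_mem {x v} hv := by
    have span_le : Submodule.span ℂ (Set.range (negWord hχ hT b)) ≤
        (Submodule.span ℂ (Set.range (negWord hχ hT b))).comap (LieModule.toEnd ℂ T.G _ x) :=
      Submodule.span_le.2 (Set.range_subset_iff.2 fun i => lie_word_mem_span i.1.2 i.2 x)
    exact span_le hv

theorem word_mem_wt (l : List (Idx N × ι)) (s : Fin N → ℤ) :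
    word hχ hT b l s ∈ T.wt _ (expVec (wordDegree l + consZero s)) := by
  induction l with
  | nil =>
    refine mem_wt.2 fun j => ?_
    have exponent_eq : Fin.tail (0 : Idx N) + s = s := zero_add s
    rw [word_nil, d_eq, lie_vac_single rfl, exponent_eq, topScalar_apply]
    simp [wordDegree]
  | cons x l ih =>
    have mem := hT.monomial_lie_mem_wt ih x.1 (b x.2)
    rwa [← map_add, add_right_comm, add_comm (wordDegree l)] at mem

theorem lie_k_zero (j : Fin (N + 1)) (v : (topDatum hχ hT).Coind) :
    ⁅T.k 0 j, v⁆ = χ j • v := by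
  refine CoinductionDatum.lie_eq_smul_of_central (fun x => ?_) ?_ ?_ v
  · have ad_eq_zero : (LieModule.toEnd ℂ T.G T.G).toLinearMap.flip (T.k 0 j) = 0 := by
      refine hom_ext fun r w => ?_
      change ⁅T.monomial r w, T.k 0 j⁆ = 0
      rw [k_eq, hT.lie_monomial]
      have coeff_eq : coeffBracket B μ ν (expVec r) (expVec 0) w (0, Pi.single j 1, 0) =
          (w.2.2 ⬝ᵥ Pi.single j 1) • (0, expVec r, 0) := by
        simp [coeffBracket]
      rw [coeff_eq, map_smul, add_zero, monomial_expVec, smul_zero]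
    exact LinearMap.congr_fun ad_eq_zero x
  · rw [k_eq]
    exact posProj_monomial_of_nonpos le_rfl _
  · rw [k_eq]
    refine (topAction_monomial hχ rfl _).trans ?_
    ext1 s
    ext1
    have exponent_eq : Fin.tail (0 : Idx N) + s = s := zero_add s
    simp [topMonomial_single, topScalar_apply, exponent_eq]

theorem wordDegree_zero_le {l : List (Idx N × ι)} (hl : ∀ x ∈ l, x.1 0 < 0) :
    wordDegree l 0 ≤ -l.length := by
  induction l with
  | nil => simp [wordDegree]
  | cons x l ih =>
    obtain ⟨hx, hl⟩ := List.forall_mem_cons.1 hl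
    have ih := ih hl
    rw [wordDegree, List.map_cons, List.sum_cons, ← wordDegree, Pi.add_apply, List.length_cons]
    lia

theorem NegWord.re_weight_zero_le (i : NegWord N ι) : (NegWord.weight i 0).re ≤ 0 := by
  have := wordDegree_zero_le i.1.2
  simpa [NegWord.weight, consZero] using (by lia : wordDegree i.1.1 0 ≤ 0)

theorem inCat_wordModule (hfin : ∀ m, FiniteDimensional ℂ
      (Submodule.span ℂ (negWord hχ hT b '' {i | NegWord.weight i = m}))) :
    T.InCat (wordModule hχ hT b) χ :=
  hT.inCat_of_span (X := negWord hχ hT b) (ω := NegWord.weight) rfl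
    (fun i => word_mem_wt i.1.1 i.2) hfin lie_k_zero NegWord.re_weight_zero_le

theorem nontrivial_wordModule : Nontrivial (wordModule hχ hT b) := by
  refine ⟨⟨⟨_, word_mem_span (l := []) (List.forall_mem_nil _) 0⟩, 0, fun h => ?_⟩⟩
  have vac_eq_zero : (topDatum hχ hT).vac (Finsupp.single 0 1) = 0 := congrArg Subtype.val h
  have eval_vac := CoinductionDatum.eval_vac (c := topDatum hχ hT) (Finsupp.single 0 1)
  rw [vac_eq_zero, map_zero] at eval_vac
  exact Finsupp.single_ne_zero.2 one_ne_zero eval_vac.symm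

end WordModule

end Tor

/-! ### Polynomial families -/

theorem finiteDimensional_span_range {𝕜 R E Λ : Type*} [Field 𝕜] [AddCommGroup E] [Module 𝕜 E]
    {f : R → E} (P : Submodule 𝕜 (R → 𝕜)) [FiniteDimensional 𝕜 P] (ℓ : Λ → E →ₗ[𝕜] 𝕜)
    (hP : ∀ i, (fun r => ℓ i (f r)) ∈ P)
    (hsep : ∀ v ∈ Submodule.span 𝕜 (Set.range f), (∀ i, ℓ i v = 0) → v = 0) :
    FiniteDimensional 𝕜 (Submodule.span 𝕜 (Set.range f)) := by
  let combination := Finsupp.linearCombination 𝕜 f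
  let evaluation : (R →₀ 𝕜) →ₗ[𝕜] Module.Dual 𝕜 P :=
    Finsupp.linearCombination 𝕜 fun r => LinearMap.proj r ∘ₗ P.subtype
  have range_combination : combination.range = Submodule.span 𝕜 (Set.range f) :=
    Finsupp.range_linearCombination 𝕜
  have ker_le : evaluation.ker ≤ combination.ker := by
    intro c hc
    refine hsep _ (range_combination ▸ LinearMap.mem_range_self _ c) fun i => ?_
    have eval_eq_zero := LinearMap.congr_fun (LinearMap.mem_ker.1 hc) ⟨_, hP i⟩
    simpa [evaluation, combination, Finsupp.linearCombination_apply, Finsupp.sum, map_sum]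
      using eval_eq_zero
  have : FiniteDimensional 𝕜 ((R →₀ 𝕜) ⧸ evaluation.ker) :=
    Module.Finite.equiv evaluation.quotKerEquivRange.symm
  rw [← range_combination, ← evaluation.ker.range_liftQ combination ker_le]
  infer_instance

section PolynomialFamilies

open scoped Matrix

variable {𝕜 R E E' E'' : Type*} [CommRing 𝕜] [AddCommGroup E] [Module 𝕜 E] [AddCommGroup E']
  [Module 𝕜 E'] [AddCommGroup E''] [Module 𝕜 E''] {I I' J S : Submodule 𝕜 (R → 𝕜)}

theorem map_mem_smul {s : Set (R → E)} {Q : Submodule 𝕜 (R → E')} {φ : R → E →ₗ[𝕜] E'}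
    (h : ∀ X ∈ s, (fun r => φ r (X r)) ∈ Q) {X : R → E} (hX : X ∈ I • Submodule.span 𝕜 s) :
    (fun r => φ r (X r)) ∈ I • Q := by
  have span_le : Submodule.span 𝕜 s ≤ Q.comap (LinearMap.pi fun r => φ r ∘ₗ LinearMap.proj r) :=
    Submodule.span_le.2 h
  induction hX using Submodule.smul_induction_on' with
  | smul q hq X hX =>
    simp only [Pi.smul_apply', map_smul]
    exact Submodule.smul_mem_smul hq (span_le hX)
  | add X _ Y _ hX hY =>
    simp only [Pi.add_apply, map_add]
    exact add_mem hX hY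

theorem map₂_mem_smul {s : Set (R → E)} {s' : Set (R → E')} {Q : Submodule 𝕜 (R → E'')}
    {β : R → E →ₗ[𝕜] E' →ₗ[𝕜] E''} (h : ∀ X ∈ s, ∀ Y ∈ s', (fun r => β r (X r) (Y r)) ∈ J • Q)
    {X : R → E} {Y : R → E'} (hX : X ∈ I • Submodule.span 𝕜 s)
    (hY : Y ∈ I' • Submodule.span 𝕜 s') : (fun r => β r (X r) (Y r)) ∈ (I * I' * J) • Q := by
  rw [mul_assoc, ← smul_eq_mul, Submodule.smul_assoc, ← smul_eq_mul, Submodule.smul_assoc]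
  exact map_mem_smul (φ := fun r => (β r).flip (Y r))
    (fun X hX => map_mem_smul (φ := fun r => β r (X r)) (h X hX) hY) hX

theorem pow_smul_mono (hS : 1 ∈ S) (P : Submodule 𝕜 (R → E)) : Monotone fun D : ℕ => S ^ D • P :=
  fun _ _ h => Submodule.smul_mono_left (pow_le_pow_right₀ (Submodule.one_le.2 hS) h)

theorem mem_pow_smul (hS : 1 ∈ S) (D : ℕ) {P : Submodule 𝕜 (R → E)} {X : R → E} (hX : X ∈ P) :
    X ∈ S ^ D • P := by
  have one_mem_pow : 1 ∈ S ^ D := Submodule.one_le.1 (one_le_pow₀ (Submodule.one_le.2 hS))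
  have smul_mem := Submodule.smul_mem_smul one_mem_pow hX
  rwa [one_smul] at smul_mem

theorem smul_mem_pow_smul {P : Submodule 𝕜 (R → E)} {D D' : ℕ} {q : R → 𝕜} (hq : q ∈ S ^ D)
    {X : R → E} (hX : X ∈ S ^ D' • P) : (fun r => q r • X r) ∈ S ^ (D + D') • P := by
  rw [pow_add, ← smul_eq_mul, Submodule.smul_assoc]
  exact Submodule.smul_mem_smul hq hX

theorem const_mem (hS : 1 ∈ S) (c : 𝕜) : (fun _ => c) ∈ S := by
  simpa [Pi.smul_def] using Submodule.smul_mem S c hS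

variable (𝕜 R E) in
/-- The constant families, over which the polynomial families of vectors of a fixed space are
generated. -/
def constFamilies : Submodule 𝕜 (R → E) := Submodule.span 𝕜 (Set.range (Function.const R))

theorem const_mem_pow_smul (hS : 1 ∈ S) (D : ℕ) (e : E) :
    (fun _ => e) ∈ S ^ D • constFamilies 𝕜 R E :=
  mem_pow_smul hS D (Submodule.subset_span ⟨e, rfl⟩)

theorem map_mem_smul_constFamilies (φ : E →ₗ[𝕜] E') {X : R → E}
    (hX : X ∈ I • constFamilies 𝕜 R E) : (fun r => φ (X r)) ∈ I • constFamilies 𝕜 R E' := by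
  refine map_mem_smul (φ := fun _ => φ) ?_ hX
  rintro _ ⟨e, rfl⟩
  exact Submodule.subset_span ⟨φ e, rfl⟩

theorem mem_smul_constFamilies {n : ℕ} {u : R → Fin n → 𝕜} (hu : ∀ j, (fun r => u r j) ∈ S) :
    u ∈ S • constFamilies 𝕜 R (Fin n → 𝕜) := by
  have u_eq : u = ∑ j, (fun r => u r j) • Function.const R (Pi.single j 1) := by
    ext1 r
    simpa using pi_eq_sum_univ' (u r)
  rw [u_eq]
  exact sum_mem fun j _ => Submodule.smul_mem_smul (hu j) (Submodule.subset_span ⟨_, rfl⟩)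

theorem dotProduct_mem {n : ℕ} {u : R → Fin n → 𝕜} (hu : ∀ j, (fun r => u r j) ∈ S)
    (c : Fin n → 𝕜) : (fun r => c ⬝ᵥ u r) ∈ S := by
  have dotProduct_eq : (fun r => c ⬝ᵥ u r) = ∑ j, c j • fun r => u r j := by
    ext r
    simp [dotProduct]
  rw [dotProduct_eq]
  exact sum_mem fun j _ => Submodule.smul_mem _ _ (hu j)

end PolynomialFamilies

namespace Tor

open scoped Matrix

variable {N : ℕ} {g : Type} [LieRing g] [LieAlgebra ℂ g] {T : Tor N g}
  {B : g →ₗ[ℂ] g →ₗ[ℂ] ℂ} {μ ν : ℂ} {R : Type*} {S : Submodule ℂ (R → ℂ)}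

variable (T S) in
/-- The monomial families of `t₀`-degree `n`, whose exponents are given by functions in `S`.  The
elements of `S ^ D • T.monomialFamilies S n` are the families that are polynomial of degree `D`
over `S`. -/
def monomialFamilies (n : ℤ) : Submodule ℂ (R → T.G) :=
  Submodule.span ℂ {X | ∃ (a : R → Idx N) (w : Coeff N g), (∀ r, a r 0 = n) ∧
    (∀ j, (fun r => expVec (a r) j) ∈ S) ∧ X = fun r => T.monomial (a r) w}

variable (N S) in
/-- The families of monomials of the top whose exponents are given by functions in `S`. -/
def topFamilies : Submodule ℂ (R → TopSpace N) :=
  Submodule.span ℂ {Z | ∃ s : R → Fin N → ℤ, (∀ j, (fun r => (s r j : ℂ)) ∈ S) ∧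
    Z = fun r => Finsupp.single (s r) 1}

theorem monomial_mem_monomialFamilies {n : ℤ} {a : R → Idx N} (ha : ∀ r, a r 0 = n)
    (haS : ∀ j, (fun r => expVec (a r) j) ∈ S) (w : Coeff N g) :
    (fun r => T.monomial (a r) w) ∈ T.monomialFamilies S n :=
  Submodule.subset_span ⟨a, w, ha, haS, rfl⟩

theorem coeffBracket_eq_add (u v : Fin (N + 1) → ℂ) (w w' : Coeff N g) :
    coeffBracket B μ ν u v w w' = (⁅w.1, w'.1⁆, 0, 0) + (w.2.2 ⬝ᵥ v) • w' - (w'.2.2 ⬝ᵥ u) • w +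
      (B w.1 w'.1 + w.2.2 ⬝ᵥ w'.2.1) • (0, u, 0) +
      (μ * ((w.2.2 ⬝ᵥ v) * (w'.2.2 ⬝ᵥ u)) + ν * ((w.2.2 ⬝ᵥ u) * (w'.2.2 ⬝ᵥ v)) -
        w'.2.2 ⬝ᵥ w.2.1) • (0, v, 0) := by
  refine Prod.ext ?_ (Prod.ext ?_ ?_) <;>
  · simp only [coeffBracket, Prod.fst_add, Prod.fst_sub, Prod.smul_fst, Prod.snd_add, Prod.snd_sub,
      Prod.smul_snd]
    module

theorem coeffBracket_mem (hS : 1 ∈ S) {u v : R → Fin (N + 1) → ℂ}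
    (hu : ∀ j, (fun r => u r j) ∈ S) (hv : ∀ j, (fun r => v r j) ∈ S) (w w' : Coeff N g) :
    (fun r => coeffBracket B μ ν (u r) (v r) w w') ∈ S ^ 3 • constFamilies ℂ R (Coeff N g) := by
  have mul_mem {q q' : R → ℂ} (hq : q ∈ S) (hq' : q' ∈ S) : q * q' ∈ S ^ 2 :=
    pow_two S ▸ Submodule.mul_mem_mul hq hq'
  have const_mem (c : ℂ) : (c • 1 : R → ℂ) ∈ S ^ 2 :=
    Submodule.smul_mem _ c (mul_one (1 : R → ℂ) ▸ mul_mem hS hS)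
  have dot_smul_mem {u : R → Fin (N + 1) → ℂ} (hu : ∀ j, (fun r => u r j) ∈ S)
      (c : Fin (N + 1) → ℂ) (x : Coeff N g) :
      (fun r => (c ⬝ᵥ u r) • x) ∈ S ^ 3 • constFamilies ℂ R (Coeff N g) :=
    smul_mem_pow_smul (D := 1) (D' := 2) ((pow_one S).symm ▸ dotProduct_mem hu c)
      (const_mem_pow_smul hS 2 x)
  have smul_k_mem {q : R → ℂ} (hq : q ∈ S ^ 2) {u : R → Fin (N + 1) → ℂ}
      (hu : ∀ j, (fun r => u r j) ∈ S) :
      (fun r => q r • ((0, u r, 0) : Coeff N g)) ∈ S ^ 3 • constFamilies ℂ R (Coeff N g) :=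
    smul_mem_pow_smul (D := 2) (D' := 1) hq <| map_mem_smul_constFamilies
      (LinearMap.inr ℂ g ((Fin (N + 1) → ℂ) × (Fin (N + 1) → ℂ)) ∘ₗ LinearMap.inl ℂ _ _)
      ((pow_one S).symm ▸ mem_smul_constFamilies hu)
  have bracket_mem := add_mem (add_mem (sub_mem (add_mem
    (const_mem_pow_smul hS 3 ((⁅w.1, w'.1⁆, 0, 0) : Coeff N g))
    (dot_smul_mem hv w.2.2 w')) (dot_smul_mem hu w'.2.2 w))
    (smul_k_mem (const_mem (B w.1 w'.1 + w.2.2 ⬝ᵥ w'.2.1)) hu))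
    (smul_k_mem (sub_mem (add_mem
      (Submodule.smul_mem _ μ (mul_mem (dotProduct_mem hv w.2.2) (dotProduct_mem hu w'.2.2)))
      (Submodule.smul_mem _ ν (mul_mem (dotProduct_mem hu w.2.2) (dotProduct_mem hv w'.2.2))))
      (const_mem (w'.2.2 ⬝ᵥ w.2.1))) hv)
  convert bracket_mem using 1
  ext1 r
  simpa using coeffBracket_eq_add (B := B) (μ := μ) (ν := ν) (u r) (v r) w w'

theorem lie_mem_pow_smul_monomialFamilies (hT : T.IsToroidal B μ ν) (hS : 1 ∈ S) {D D' : ℕ}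
    {n n' : ℤ} {X Y : R → T.G} (hX : X ∈ S ^ D • T.monomialFamilies S n)
    (hY : Y ∈ S ^ D' • T.monomialFamilies S n') :
    (fun r => ⁅X r, Y r⁆) ∈ S ^ (D + D' + 3) • T.monomialFamilies S (n + n') := by
  rw [pow_add, pow_add]
  refine map₂_mem_smul (β := fun _ => (LieModule.toEnd ℂ T.G T.G).toLinearMap) ?_ hX hY
  rintro _ ⟨a, w, ha, haS, rfl⟩ _ ⟨a', w', ha', haS', rfl⟩
  change (fun r => ⁅T.monomial (a r) w, T.monomial (a' r) w'⁆) ∈ _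
  simp only [hT.lie_monomial]
  refine map_mem_smul (φ := fun r => T.monomial (a r + a' r)) ?_ (coeffBracket_mem hS haS haS' w w')
  rintro _ ⟨c, rfl⟩
  refine monomial_mem_monomialFamilies (fun r => ?_) (fun j => ?_) c
  · rw [Pi.add_apply, ha, ha']
  · simp only [map_add]
    exact add_mem (haS j) (haS' j)

variable {χ : Fin (N + 1) → ℂ} {hχ : ∀ j, j ≠ 0 → χ j = 0}

theorem topScalar_mem (hS : 1 ∈ S) {s : R → Fin N → ℤ} (hs : ∀ j, (fun r => (s r j : ℂ)) ∈ S)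
    (w : Coeff N g) : (fun r => topScalar χ (s r) w) ∈ S := by
  simp only [topScalar_apply, dotProduct_comm (expVec _)]
  refine add_mem (const_mem hS _) (dotProduct_mem (Fin.cases ?_ fun j => ?_) _)
  · simp only [consZero, expVec_apply, Fin.cons_zero, Int.cast_zero]
    exact zero_mem S
  · simpa [consZero] using hs j

theorem topAction_mem_pow_smul_topFamilies (hS : 1 ∈ S) {D D' : ℕ} {n : ℤ} {X : R → T.G}
    {Z : R → TopSpace N} (hX : X ∈ S ^ D • T.monomialFamilies S n)
    (hZ : Z ∈ S ^ D' • topFamilies N S) :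
    (fun r => T.topAction hχ (X r) (Z r)) ∈ S ^ (D + D' + 1) • topFamilies N S := by
  rw [pow_add, pow_add]
  refine map₂_mem_smul (β := fun _ => T.topAction hχ) ?_ hX hZ
  rintro _ ⟨a, w, ha, haS, rfl⟩ _ ⟨s, hs, rfl⟩
  by_cases hn : n = 0
  · have single_mem : (fun r => Finsupp.single (Fin.tail (a r) + s r) 1) ∈ topFamilies N S := by
      refine Submodule.subset_span ⟨_, fun j => ?_, rfl⟩
      simp only [Pi.add_apply, Int.cast_add]
      exact add_mem (haS j.succ) (hs j)
    have smul_mem := Submodule.smul_mem_smul (topScalar_mem (χ := χ) hS hs w) single_mem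
    simpa [topAction_monomial hχ ((ha _).trans hn), topMonomial_single, Pi.smul_def', pow_one]
      using smul_mem
  · simp only [topAction_monomial_of_ne hχ (ne_of_eq_of_ne (ha _) hn), LinearMap.zero_apply]
    exact zero_mem _

theorem mem_degPart_of_mem_smul_monomialFamilies {I : Submodule ℂ (R → ℂ)} {P : ℤ → Prop} {n : ℤ}
    (hn : P n) {X : R → T.G} (hX : X ∈ I • T.monomialFamilies S n) (r : R) :
    X r ∈ T.degPart P := by
  have le_comap : T.monomialFamilies S n ≤ (T.degPart P).comap (LinearMap.proj r) := by
    refine Submodule.span_le.2 ?_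
    rintro _ ⟨a, w, ha, -, rfl⟩
    exact monomial_mem_degPart ((ha r).symm ▸ hn) w
  induction hX using Submodule.smul_induction_on' with
  | smul q _ X hX => exact Submodule.smul_mem _ (q r) (le_comap hX)
  | add X _ Y _ hX hY => exact add_mem hX hY

section PolyValued

variable {χ : Fin (N + 1) → ℂ} (hχ : ∀ j, j ≠ 0 → χ j = 0) (hT : T.IsToroidal B μ ν)

variable (S) in
/-- The families of vectors of the coinduced module whose values on products of at most `k` elements
of positive degree are polynomial over `S`: of degree `C` for the empty product, the degree
growing by `D + 3` when a factor of degree `D` is applied. -/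
def polyValued : ℕ → ℕ → Submodule ℂ (R → (topDatum hχ hT).Coind)
  | 0, C => (S ^ C • topFamilies N S).comap ((topDatum hχ hT).eval.compLeft R)
  | k + 1, C => polyValued k C ⊓
      ⨅ (D : ℕ) (n : ℤ) (_ : 1 ≤ n) (Y : R → T.G) (_ : Y ∈ S ^ D • T.monomialFamilies S n),
        (polyValued k (C + D + 3)).comap
          (LinearMap.pi fun r => LieModule.toEnd ℂ T.G _ (Y r) ∘ₗ LinearMap.proj r)

variable {hχ hT}

theorem mem_polyValued_zero {C : ℕ} {Φ : R → (topDatum hχ hT).Coind} :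
    Φ ∈ polyValued S hχ hT 0 C ↔
      (fun r => (topDatum hχ hT).eval (Φ r)) ∈ S ^ C • topFamilies N S := Iff.rfl

theorem mem_polyValued_succ {k C : ℕ} {Φ : R → (topDatum hχ hT).Coind} :
    Φ ∈ polyValued S hχ hT (k + 1) C ↔ Φ ∈ polyValued S hχ hT k C ∧
      ∀ D n, 1 ≤ n → ∀ Y ∈ S ^ D • T.monomialFamilies S n,
        (fun r => ⁅Y r, Φ r⁆) ∈ polyValued S hχ hT k (C + D + 3) := by
  simp only [polyValued, Submodule.mem_inf, Submodule.mem_iInf]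
  rfl

theorem lie_mem_polyValued_zero (hS : 1 ∈ S) {C D : ℕ} {n : ℤ} {X : R → T.G}
    (hX : X ∈ S ^ D • T.monomialFamilies S n) {Φ : R → (topDatum hχ hT).Coind}
    (hΦ : Φ ∈ polyValued S hχ hT 1 C) :
    (fun r => ⁅X r, Φ r⁆) ∈ polyValued S hχ hT 0 (C + D + 3) := by
  obtain ⟨hΦ, lie_mem⟩ := mem_polyValued_succ.1 hΦ
  rw [mem_polyValued_zero] at hΦ ⊢
  rw [funext fun r => CoinductionDatum.eval_lie (X r) (Φ r)]
  refine add_mem (pow_smul_mono hS _ (by lia)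
    (topAction_mem_pow_smul_topFamilies (hχ := hχ) hS hX hΦ)) ?_
  rcases lt_or_ge 0 n with hn | hn
  · have posProj_eq (r : R) : ((topDatum hχ hT).proj (X r) : T.G) = X r :=
      posProj_coe (mem_degPart_of_mem_smul_monomialFamilies (P := (1 ≤ ·)) hn hX r)
    simp only [posProj_eq]
    exact mem_polyValued_zero.1 (lie_mem D n hn X hX)
  · have posProj_eq (r : R) : (topDatum hχ hT).proj (X r) = 0 :=
      posProj_eq_zero_iff.2 (mem_degPart_of_mem_smul_monomialFamilies (P := (· ≤ 0)) hn hX r)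
    simp only [posProj_eq, ZeroMemClass.coe_zero, zero_lie, map_zero]
    exact zero_mem _

theorem lie_mem_polyValued (hS : 1 ∈ S) {k C D : ℕ} {n : ℤ} {X : R → T.G}
    (hX : X ∈ S ^ D • T.monomialFamilies S n) {Φ : R → (topDatum hχ hT).Coind}
    (hΦ : Φ ∈ polyValued S hχ hT (k + 1) C) :
    (fun r => ⁅X r, Φ r⁆) ∈ polyValued S hχ hT k (C + D + 3) := by
  induction k generalizing C D n X Φ with
  | zero => exact lie_mem_polyValued_zero hS hX hΦ
  | succ k ih =>
    obtain ⟨hΦ, lie_mem⟩ := mem_polyValued_succ.1 hΦ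
    refine mem_polyValued_succ.2 ⟨ih hX hΦ, fun D' n' hn' Y hY => ?_⟩
    simp only [leibniz_lie (Y _)]
    have lie_lie_mem := ih (lie_mem_pow_smul_monomialFamilies hT hS hY hX) hΦ
    have lie_mem_lie := ih hX (lie_mem D' n' hn' Y hY)
    rw [show C + (D' + D + 3) + 3 = C + D + 3 + D' + 3 by lia] at lie_lie_mem
    rw [show C + D' + 3 + D + 3 = C + D + 3 + D' + 3 by lia] at lie_mem_lie
    exact add_mem lie_lie_mem lie_mem_lie

variable {ι : Type} {b : Module.Basis ι ℂ (Coeff N g)}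

theorem vac_mem_polyValued (hS : 1 ∈ S) {s : R → Fin N → ℤ} (hs : ∀ j, (fun r => (s r j : ℂ)) ∈ S)
    (k : ℕ) : (fun r => (topDatum hχ hT).vac (Finsupp.single (s r) 1)) ∈
      polyValued S hχ hT k 0 := by
  induction k with
  | zero =>
    rw [mem_polyValued_zero]
    simp only [CoinductionDatum.eval_vac]
    exact mem_pow_smul hS 0 (Submodule.subset_span ⟨s, hs, rfl⟩)
  | succ k ih =>
    refine mem_polyValued_succ.2 ⟨ih, fun D n hn Y hY => ?_⟩
    have lie_vac_eq_zero (r : R) : ⁅Y r, (topDatum hχ hT).vac (Finsupp.single (s r) 1)⁆ = 0 :=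
      CoinductionDatum.lie_vac_of_mem (c := topDatum hχ hT)
        (mem_degPart_of_mem_smul_monomialFamilies hn hY r) _
    simp only [lie_vac_eq_zero]
    exact zero_mem _

theorem word_mem_polyValued (hS : 1 ∈ S) {l : List ((R → Idx N) × ι)}
    (hl : ∀ x ∈ l, (∃ n, ∀ r, x.1 r 0 = n) ∧ ∀ j, (fun r => expVec (x.1 r) j) ∈ S)
    {s : R → Fin N → ℤ} (hs : ∀ j, (fun r => (s r j : ℂ)) ∈ S) (k : ℕ) :
    (fun r => word hχ hT b (l.map fun x => (x.1 r, x.2)) (s r)) ∈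
      polyValued S hχ hT k (3 * l.length) := by
  induction l generalizing k with
  | nil => exact vac_mem_polyValued hS hs k
  | cons x l ih =>
    obtain ⟨⟨⟨n, hn⟩, hx⟩, hl⟩ := List.forall_mem_cons.1 hl
    have monomial_mem := mem_pow_smul hS 0 (monomial_mem_monomialFamilies (T := T) hn hx (b x.2))
    exact lie_mem_polyValued hS monomial_mem (ih hl (k + 1))

variable (N) in
/-- The sum of the coefficients of a Laurent polynomial in `t₁, …, t_N`. -/
def coeffSum : TopSpace N →ₗ[ℂ] ℂ := Finsupp.linearCombination ℂ fun _ => 1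

theorem coeffSum_mem {I : Submodule ℂ (R → ℂ)} {Z : R → TopSpace N} (hZ : Z ∈ I • topFamilies N S) :
    (fun r => coeffSum N (Z r)) ∈ I := by
  rw [← mul_one I, ← smul_eq_mul]
  refine map_mem_smul (φ := fun _ => coeffSum N) ?_ hZ
  rintro _ ⟨s, -, rfl⟩
  simp only [coeffSum, Finsupp.linearCombination_single, smul_eq_mul, mul_one]
  exact Submodule.one_le.1 le_rfl

variable (hχ hT) in
/-- The sum of the coefficients of the value of a coinduced vector on the product of the monomials
`t^r w` of a list `ys`, the first entry acting first. -/
def matrixCoeff : List (Idx N × Coeff N g) → (topDatum hχ hT).Coind →ₗ[ℂ] ℂ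
  | [] => coeffSum N ∘ₗ (topDatum hχ hT).eval
  | y :: ys => matrixCoeff ys ∘ₗ LieModule.toEnd ℂ T.G _ (T.monomial y.1 y.2)

theorem matrixCoeff_mem (hS : 1 ∈ S) {ys : List (Idx N × Coeff N g)} (hys : ∀ y ∈ ys, 1 ≤ y.1 0)
    {C : ℕ} {Φ : R → (topDatum hχ hT).Coind} (hΦ : Φ ∈ polyValued S hχ hT ys.length C) :
    (fun r => matrixCoeff hχ hT ys (Φ r)) ∈ S ^ (C + 3 * ys.length) := by
  induction ys generalizing C Φ with
  | nil => exact coeffSum_mem hΦ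
  | cons y ys ih =>
    have monomial_mem := mem_pow_smul hS 0 (monomial_mem_monomialFamilies (T := T)
      (a := fun _ => y.1) (fun _ => rfl) (fun _ => const_mem hS _) y.2)
    have matrixCoeff_lie_mem := ih (List.forall_mem_cons.1 hys).2
      (lie_mem_polyValued hS monomial_mem hΦ)
    rwa [show C + 0 + 3 + 3 * ys.length = C + 3 * (y :: ys).length by
      rw [List.length_cons]; ring] at matrixCoeff_lie_mem

theorem topMonomial_zero_apply (w : Coeff N g) (z : TopSpace N) (s : Fin N → ℤ) :
    topMonomial χ 0 w z s = topScalar χ s w * z s := by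
  induction z using Finsupp.induction_linear with
  | zero => simp
  | add z z' hz hz' => rw [map_add, Finsupp.add_apply, hz, hz', Finsupp.add_apply, mul_add]
  | single s' c =>
    have exponent_eq : Fin.tail (0 : Idx N) + s' = s' := zero_add s'
    rw [topMonomial_single, exponent_eq]
    by_cases h : s' = s
    · simp [h]
    · simp [Finsupp.single_eq_of_ne' h]

theorem eq_expVec_of_eval_apply_ne_zero {m : Fin (N + 1) → ℂ} {v : (topDatum hχ hT).Coind}
    (hv : v ∈ T.wt _ m) {s : Fin N → ℤ} (hs : (topDatum hχ hT).eval v s ≠ 0) :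
    m = expVec (consZero s) := by
  ext j
  have eval_d := CoinductionDatum.eval_lie (c := topDatum hχ hT) (T.d 0 j) v
  have proj_d : (topDatum hχ hT).proj (T.d 0 j) = 0 := by
    rw [d_eq]
    exact posProj_monomial_of_nonpos le_rfl _
  have rep_d : (topDatum hχ hT).rep (T.d 0 j) =
      topMonomial χ (0 : Idx N) ((0, 0, Pi.single j 1) : Coeff N g) := by
    rw [d_eq]
    exact topAction_monomial hχ rfl _
  rw [mem_wt.1 hv j, proj_d, rep_d, ZeroMemClass.coe_zero, zero_lie, map_zero, add_zero,
    map_smul] at eval_d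
  have eval_d_apply := DFunLike.congr_fun eval_d s
  rw [topMonomial_zero_apply, Finsupp.smul_apply, smul_eq_mul] at eval_d_apply
  simpa [topScalar_apply] using mul_right_cancel₀ hs eval_d_apply

theorem eval_eq_zero_of_coeffSum_eq_zero {m : Fin (N + 1) → ℂ} {v : (topDatum hχ hT).Coind}
    (hv : v ∈ T.wt _ m) (hsum : m 0 = 0 → coeffSum N ((topDatum hχ hT).eval v) = 0) :
    (topDatum hχ hT).eval v = 0 := by
  by_contra hne
  obtain ⟨s, hs⟩ := Finsupp.ne_iff.1 hne
  have m_eq := eq_expVec_of_eval_apply_ne_zero hv hs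
  have eval_eq_single : (topDatum hχ hT).eval v = Finsupp.single s ((topDatum hχ hT).eval v s) := by
    refine Finsupp.eq_single_iff.2 ⟨fun s' hs' => ?_, rfl⟩
    have m_eq' := eq_expVec_of_eval_apply_ne_zero hv (Finsupp.mem_support_iff.1 hs')
    exact Finset.mem_singleton.2 <|
      (Fin.cons_right_injective 0 (expVec_injective (m_eq'.symm.trans m_eq)))
  have sum_eq_zero := hsum (by simp [m_eq, consZero])
  rw [eval_eq_single] at sum_eq_zero
  exact hs (by simpa [coeffSum] using sum_eq_zero)

theorem eq_zero_of_matrixCoeff_eq_zero {m : Fin (N + 1) → ℂ} {v : (topDatum hχ hT).Coind}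
    (hv : v ∈ T.wt _ m) (hcoeff : ∀ ys : List (Idx N × Coeff N g), (∀ y ∈ ys, 1 ≤ y.1 0) →
      (ys.length : ℝ) ≤ -(m 0).re → matrixCoeff hχ hT ys v = 0) : v = 0 := by
  let κ := {v : (topDatum hχ hT).Coind // ∃ m, v ∈ T.wt _ m ∧
    ∀ ys : List (Idx N × Coeff N g), (∀ y ∈ ys, 1 ≤ y.1 0) →
      (ys.length : ℝ) ≤ -(m 0).re → matrixCoeff hχ hT ys v = 0}
  refine CoinductionDatum.eq_zero_of_eval_eq_zero (Subtype.val : κ → _) ?_ ?_ ⟨v, m, hv, hcoeff⟩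
  · rintro ⟨v, m, hv, hcoeff⟩ y hy
    refine degPart_le (S := (Submodule.span ℂ (Set.range (Subtype.val : κ → _))).comap
      ((LieModule.toEnd ℂ T.G _).toLinearMap.flip v)) (fun r w hr => ?_) hy
    refine Submodule.subset_span ⟨⟨⁅T.monomial r w, v⁆, _, hT.monomial_lie_mem_wt hv r w, ?_⟩, rfl⟩
    intro ys hys hlength
    refine hcoeff ((r, w) :: ys) (List.forall_mem_cons.2 ⟨hr, hys⟩) ?_
    have one_le : (1 : ℝ) ≤ r 0 := mod_cast hr
    simp only [Pi.add_apply, expVec_apply, Complex.add_re, Complex.intCast_re] at hlength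
    push_cast [List.length_cons]
    linarith
  · rintro ⟨v, m, hv, hcoeff⟩
    refine eval_eq_zero_of_coeffSum_eq_zero hv fun hm => ?_
    exact hcoeff [] (List.forall_mem_nil _) (by simp [hm])

theorem finiteDimensional_span_of_mem_polyValued (hfg : S.FG) (hS : 1 ∈ S) {C : ℕ}
    {Φ : R → (topDatum hχ hT).Coind} (hΦ : ∀ k, Φ ∈ polyValued S hχ hT k C)
    {m : Fin (N + 1) → ℂ} (hm : ∀ r, Φ r ∈ T.wt _ m) :
    FiniteDimensional ℂ (Submodule.span ℂ (Set.range Φ)) := by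
  let P := S ^ (C + 3 * ⌊-(m 0).re⌋₊)
  have : FiniteDimensional ℂ P := Module.Finite.iff_fg.2 (hfg.pow _)
  let Λ := {ys : List (Idx N × Coeff N g) // (∀ y ∈ ys, 1 ≤ y.1 0) ∧ (ys.length : ℝ) ≤ -(m 0).re}
  refine finiteDimensional_span_range P (fun ys : Λ => matrixCoeff hχ hT ys.1) ?_ ?_
  · rintro ⟨ys, hys, hlength⟩
    have length_le := Nat.le_floor hlength
    exact pow_le_pow_right₀ (Submodule.one_le.2 hS) (by lia) (matrixCoeff_mem hS hys (hΦ _))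
  · intro v hv hcoeff
    exact eq_zero_of_matrixCoeff_eq_zero (Submodule.span_le.2 (Set.range_subset_iff.2 hm) hv)
      fun ys hys hlength => hcoeff ⟨ys, hys, hlength⟩

end PolyValued

/-! ### Finiteness of the weight spaces -/

section Finiteness

variable {N : ℕ} {g : Type} [LieRing g] [LieAlgebra ℂ g] {T : Tor N g}
  {B : g →ₗ[ℂ] g →ₗ[ℂ] ℂ} {μ ν : ℂ} {χ : Fin (N + 1) → ℂ} {hχ : ∀ j, j ≠ 0 → χ j = 0}
  {hT : T.IsToroidal B μ ν} {ι : Type} {b : Module.Basis ι ℂ (Coeff N g)}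

variable (hχ hT b) in
/-- The words whose letters have prescribed basis vectors and `t₀`-degrees `τ` and whose total
degree in the variables `t₁, …, t_N` is `σ`, as a family in the remaining degrees `r` of the
letters. -/
def typedWord {k : ℕ} (τ : Fin k → ι × ℤ) (σ : Fin N → ℤ) (r : Fin k → Fin N → ℤ) :
    (topDatum hχ hT).Coind :=
  word hχ hT b (List.ofFn fun i => (Fin.cons (τ i).2 (r i), (τ i).1)) (σ - ∑ i, r i)

theorem wordDegree_ofFn {k : ℕ} (x : Fin k → Idx N × ι) :
    wordDegree (List.ofFn x) = ∑ i, (x i).1 := by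
  rw [wordDegree, List.map_ofFn, List.sum_ofFn]
  rfl

theorem typedWord_mem_wt {k : ℕ} (τ : Fin k → ι × ℤ) (σ : Fin N → ℤ) (r : Fin k → Fin N → ℤ) :
    typedWord hχ hT b τ σ r ∈ T.wt _ (expVec (Fin.cons (∑ i, (τ i).2) σ)) := by
  have exponent_eq : wordDegree (List.ofFn fun i => ((Fin.cons (τ i).2 (r i) : Idx N), (τ i).1)) +
      consZero (σ - ∑ i, r i) = Fin.cons (∑ i, (τ i).2) σ := by
    rw [wordDegree_ofFn]
    ext j
    refine Fin.cases ?_ (fun j => ?_) j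
    · simp [consZero]
    · simp [consZero]
  exact exponent_eq ▸ word_mem_wt _ _

theorem exists_fg_coord_mem (k N : ℕ) : ∃ S : Submodule ℂ ((Fin k → Fin N → ℤ) → ℂ), S.FG ∧
    1 ∈ S ∧ ∀ i j, (fun r => (r i j : ℂ)) ∈ S :=
  ⟨Submodule.span ℂ ({1} ∪ Set.range fun (p : Fin k × Fin N) r => (r p.1 p.2 : ℂ)),
    Submodule.fg_span ((Set.finite_singleton _).union (Set.finite_range _)),
    Submodule.subset_span (Or.inl rfl), fun i j => Submodule.subset_span (Or.inr ⟨(i, j), rfl⟩)⟩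

theorem finiteDimensional_span_typedWord {k : ℕ} (τ : Fin k → ι × ℤ) (σ : Fin N → ℤ) :
    FiniteDimensional ℂ (Submodule.span ℂ (Set.range (typedWord hχ hT b τ σ))) := by
  obtain ⟨S, hfg, hS, coord_mem⟩ := exists_fg_coord_mem k N
  refine finiteDimensional_span_of_mem_polyValued hfg hS (C := 3 * k) (fun K => ?_)
    (typedWord_mem_wt τ σ)
  let letters : List (((Fin k → Fin N → ℤ) → Idx N) × ι) :=
    List.ofFn fun i => (fun r => Fin.cons (τ i).2 (r i), (τ i).1)
  have letters_mem : ∀ x ∈ letters, (∃ n, ∀ r, x.1 r 0 = n) ∧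
      ∀ j, (fun r => expVec (x.1 r) j) ∈ S := by
    refine List.forall_mem_ofFn_iff.2 fun i =>
      ⟨⟨(τ i).2, fun _ => rfl⟩, Fin.cases ?_ fun j => ?_⟩
    · exact const_mem hS ((τ i).2 : ℂ)
    · exact coord_mem i j
  have exponent_mem (j) : (fun r : Fin k → Fin N → ℤ => ((σ - ∑ i, r i) j : ℂ)) ∈ S := by
    convert sub_mem (const_mem hS (σ j : ℂ)) (sum_mem (t := Finset.univ) fun i _ => coord_mem i j)
      using 1
    ext r
    simp
  have word_mem := word_mem_polyValued (hχ := hχ) (hT := hT) (b := b) hS letters_mem exponent_mem K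
  simp only [letters, List.map_ofFn, List.length_ofFn] at word_mem
  exact word_mem

theorem wordDegree_zero_le_of_mem {l : List (Idx N × ι)} (hl : ∀ x ∈ l, x.1 0 < 0)
    {x : Idx N × ι} (hx : x ∈ l) : wordDegree l 0 ≤ x.1 0 := by
  obtain ⟨l₁, l₂, rfl⟩ := List.append_of_mem hx
  simp only [List.forall_mem_append, List.forall_mem_cons] at hl
  have le₁ := wordDegree_zero_le hl.1
  have le₂ := wordDegree_zero_le hl.2.2
  have degree_eq : wordDegree (l₁ ++ x :: l₂) = wordDegree l₁ + (x.1 + wordDegree l₂) := by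
    simp [wordDegree]
  rw [degree_eq, Pi.add_apply, Pi.add_apply]
  lia

theorem word_eq_typedWord (l : List (Idx N × ι)) (s : Fin N → ℤ) :
    word hχ hT b l s = typedWord hχ hT b (fun i => ((l.get i).2, (l.get i).1 0))
      (Fin.tail (wordDegree l) + s) fun i => Fin.tail (l.get i).1 := by
  have tail_wordDegree : Fin.tail (wordDegree l) = ∑ i, Fin.tail (l.get i).1 := by
    conv_lhs => rw [← List.ofFn_get l, wordDegree_ofFn]
    ext j
    simp [Fin.tail]
  simp only [typedWord, Fin.cons_self_tail, Prod.mk.eta, List.ofFn_get, tail_wordDegree,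
    add_sub_cancel_left]

theorem exists_negWord_mem_range_typedWord {M : Idx N} {i : NegWord N ι}
    (hi : NegWord.weight i = expVec M) :
    ∃ τ : Σ k : Fin ((-M 0).toNat + 1), Fin k → ι × Set.Icc (M 0) 0, negWord hχ hT b i ∈
      Set.range (typedWord hχ hT b (fun p => ((τ.2 p).1, ((τ.2 p).2 : ℤ))) (Fin.tail M)) := by
  obtain ⟨⟨l, hl⟩, s⟩ := i
  obtain rfl : wordDegree l + consZero s = M := expVec_injective hi
  have degree_zero : (wordDegree l + consZero s) 0 = wordDegree l 0 := by simp [consZero]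
  have length_le := wordDegree_zero_le hl
  refine ⟨⟨⟨l.length, by lia⟩, fun p => ((l.get p).2, ⟨(l.get p).1 0,
    degree_zero.trans_le (wordDegree_zero_le_of_mem hl (l.get_mem p)), (hl _ (l.get_mem p)).le⟩)⟩,
    fun p => Fin.tail (l.get p).1, ?_⟩
  exact (word_eq_typedWord l s).symm

theorem finiteDimensional_span_negWord [Finite ι] (m : Fin (N + 1) → ℂ) : FiniteDimensional ℂ
    (Submodule.span ℂ (negWord hχ hT b '' {i | NegWord.weight i = m})) := by
  rcases Set.eq_empty_or_nonempty {i : NegWord N ι | NegWord.weight i = m} with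
    no_word | ⟨i, rfl⟩
  · rw [no_word, Set.image_empty, Submodule.span_empty]
    infer_instance
  set M := wordDegree i.1.1 + consZero i.2
  let typedSpan (τ : Σ k : Fin ((-M 0).toNat + 1), Fin k → ι × Set.Icc (M 0) 0) :=
    Submodule.span ℂ
      (Set.range (typedWord hχ hT b (fun p => ((τ.2 p).1, ((τ.2 p).2 : ℤ))) (Fin.tail M)))
  have finite_typedSpan (τ) : FiniteDimensional ℂ (typedSpan τ) :=
    finiteDimensional_span_typedWord _ _
  refine Submodule.finiteDimensional_of_le (S₂ := ⨆ τ, typedSpan τ) (Submodule.span_le.2 ?_)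
  rintro _ ⟨i', hi', rfl⟩
  obtain ⟨τ, hτ⟩ := exists_negWord_mem_range_typedWord (hχ := hχ) (hT := hT) (b := b) hi'
  exact Submodule.mem_iSup_of_mem τ (Submodule.subset_span hτ)

end Finiteness

end Tor

theorem statement5_general {N : ℕ} {g : Type} [LieRing g] [LieAlgebra ℂ g] [FiniteDimensional ℂ g]
    {B : g →ₗ[ℂ] g →ₗ[ℂ] ℂ} {μ ν : ℂ} {T : Tor N g} (hT : T.IsToroidal B μ ν)
    (χ : Fin (N + 1) → ℂ) :
    (∃ C : CatObj T χ, Nontrivial C.carrier) ↔ ∀ j, j ≠ 0 → χ j = 0 := by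
  constructor
  · rintro ⟨C, _⟩ j hj
    exact C.incat.char_eq_zero hT hj
  · intro hχ
    let b := Module.finBasis ℂ (Coeff N g)
    exact ⟨{ carrier := Tor.wordModule hχ hT b
             incat := Tor.inCat_wordModule Tor.finiteDimensional_span_negWord },
      Tor.nontrivial_wordModule⟩

end

/-- Theorem 2.5(a): for a non-zero linear map χ : Z → ℂ
(recorded by its values χ j = χ(k_j) on the spanning set {k₀,…,k_N}), the
category B_χ contains a non-zero g(μ,ν)-module if and only if χ(k₀) ≠ 0 and
χ(k_j) = 0 for all j = 1,…,N. -/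
theorem statement5 (N : ℕ) (hN : 1 ≤ N) (g : Type) [LieRing g] [LieAlgebra ℂ g]
    [FiniteDimensional ℂ g] [LieAlgebra.IsSimple ℂ g]
    (B : g →ₗ[ℂ] g →ₗ[ℂ] ℂ)
    (hBsymm : ∀ x y : g, B x y = B y x)
    (hBnondeg : ∀ x : g, (∀ y : g, B x y = 0) → x = 0)
    (hBinv : ∀ x y z : g, B ⁅x, y⁆ z = B x ⁅y, z⁆)
    (μ ν : ℂ) (T : Tor N g) (hT : T.IsToroidal B μ ν)
    (χ : Fin (N + 1) → ℂ) (hχ : χ ≠ 0) :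
    (∃ C : CatObj T χ, Nontrivial C.carrier) ↔
      (χ 0 ≠ 0 ∧ ∀ j : Fin (N + 1), j ≠ 0 → χ j = 0) := by
  rw [statement5_general hT χ, iff_and_self]
  exact fun h h0 => hχ (funext fun j => (eq_or_ne j 0).elim (· ▸ h0) (h j))

end ToroidalPaper
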